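/- Assume conditions (Cond1), (CondAttr2) and (CondAttr3). Then the skew product multivalued semiflow Π⁺ on 𝒳⁺ = H⁺ × Σ is dynamically gradient with respect to the disjoint family of isolated weakly invariant sets ℳ = {M₁, M₂}, where M₁ = {(ξ_{M,σ}(0), σ) : σ ∈ Σ} and M₂ = {(0,σ) : σ ∈ Σ}: every bounded complete trajectory Φ of 𝒦⁺ either lies entirely in M₁ or in M₂, or satisfies dist_{𝒳⁺}(Φ(t), M₁) → 0 as t → +∞ and dist_{𝒳⁺}(Φ(t), M₂) → 0 as t → −∞. Hence the global attractor 𝔸⁺ of Π⁺ possesses a gradient structure. -/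

import Mathlib

/-!
Two trajectories which are positive for the same symbol solve equations with the same reaction
term, so by the Poincaré inequality their distance contracts at the rate `π² - ω₁`. The strong
maximum principle, obtained by sliding a bump barrier, makes a nonnegative trajectory positive
immediately after any time at which it is nonzero. Hence a bounded complete trajectory which is
nonzero arbitrarily far in the past is attracted from `-∞` and equals `ξ`. Otherwise it vanishes
up to some time, and is then either identically zero or positive from some time on, in which case
it converges to `ξ`. Testing the equation with `sin (π x)` keeps `ξ` away from zero, which
separates and isolates the two Morse sets. The convergence to `M₁` as a set relies on its
compactness, which follows from the compactness of the hull and from the continuity of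
`σ ↦ ξ_σ(0)`, a consequence of the contraction estimate with a perturbed symbol.
-/

open MeasureTheory Set

noncomputable section

/-- Lebesgue measure restricted to the spatial interval `(0,1)`. -/
def μ01 : Measure ℝ := volume.restrict (Ioo (0:ℝ) 1)

/-- `H = L²(0,1)`. -/
abbrev Hsp : Type := Lp ℝ 2 μ01

/-- The Heaviside multifunction. -/
def heaviside (s : ℝ) : Set ℝ :=
  if s < 0 then {-1} else if s = 0 then Icc (-1) 1 else {1}

/-- Condition (Cond1). -/
structure Cond1 (b ω : ℝ → ℝ) (b0 b1 ω0 ω1 : ℝ) : Prop where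
  contb : Continuous b
  contω : Continuous ω
  b0pos : 0 < b0
  blb : ∀ t, b0 ≤ b t
  bub : ∀ t, b t ≤ b1
  ω0nonneg : 0 ≤ ω0
  ωlb : ∀ t, ω0 ≤ ω t
  ωub : ∀ t, ω t ≤ ω1

/-- `v ∈ H²(0,1) ∩ H¹₀(0,1)` with (weak) second derivative `w ∈ L²(0,1)`:
`v` has a representative that is continuous on `[0,1]`, vanishes at the boundary,
is differentiable on `(0,1)` and whose derivative is an antiderivative of `w`. -/
def InDomainA (v w : Hsp) : Prop :=
  ∃ vt : ℝ → ℝ, ContinuousOn vt (Icc 0 1) ∧ vt 0 = 0 ∧ vt 1 = 0 ∧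
    (∀ᵐ x ∂μ01, vt x = v x) ∧
    ∃ g : ℝ → ℝ,
      (∀ x ∈ Ioo (0:ℝ) 1, HasDerivAt vt (g x) x) ∧
      ∀ x ∈ Ioo (0:ℝ) 1, ∀ y ∈ Ioo (0:ℝ) 1, g x - g y = ∫ z in y..x, w z

/-- A strong solution of the inclusion on `[τ,∞)`, with explicit data:
`r` is the `L²`-selection, `u'` the time derivative, `uxx` the second spatial derivative. -/
structure IsStrongSolutionWith (b ω : ℝ → ℝ) (τ : ℝ) (u r u' uxx : ℝ → Hsp) : Prop where
  cont : ContinuousOn u (Ici τ)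
  rmem : ∀ T, τ < T → MemLp r 2 (volume.restrict (Ioo τ T))
  sel : ∀ᵐ t ∂(volume.restrict (Ioi τ)), ∀ᵐ x ∂μ01,
      ∃ h ∈ heaviside (u t x), r t x = b t * h + ω t * u t x
  dom : ∀ᵐ t ∂(volume.restrict (Ioi τ)), InDomainA (u t) (uxx t)
  eq : ∀ᵐ t ∂(volume.restrict (Ioi τ)), u' t = r t + uxx t
  fund : ∀ T1 T2 : ℝ, τ < T1 → T1 < T2 →
      IntervalIntegrable u' volume T1 T2 ∧
      ∀ t ∈ Icc T1 T2, u t = u T1 + ∫ s in T1..t, u' s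

/-- A strong solution of the inclusion on `[τ,∞)`. -/
def IsStrongSolution (b ω : ℝ → ℝ) (τ : ℝ) (u : ℝ → Hsp) : Prop :=
  ∃ r u' uxx, IsStrongSolutionWith b ω τ u r u' uxx

/-- The solution is non-negative on `[τ,∞)`. -/
def NonnegOn (u : ℝ → Hsp) (τ : ℝ) : Prop :=
  ∀ t, τ ≤ t → ∀ᵐ x ∂μ01, 0 ≤ u t x

/-- `v` is positive: it has a continuous representative on `[0,1]`
which is strictly positive on `(0,1)`. -/
def IsPositive (v : Hsp) : Prop :=
  ∃ vt : ℝ → ℝ, ContinuousOn vt (Icc 0 1) ∧ (∀ᵐ x ∂μ01, vt x = v x) ∧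
    ∀ x ∈ Ioo (0:ℝ) 1, 0 < vt x


/-- The translation (driving) operator `θ_h` on symbols `σ ∈ C(ℝ,ℝ²)`:
`(θ_h σ)(t) = σ(t+h)`. -/
def translateCM (h : ℝ) (σ : C(ℝ, ℝ × ℝ)) : C(ℝ, ℝ × ℝ) :=
  σ.comp ⟨fun t => t + h, continuous_add_right h⟩

/-- The hull of a symbol `σ₀`: the closure (for the topology of uniform
convergence on compact sets, i.e. the compact-open topology) of its translates. -/
def hullSet (σ0 : C(ℝ, ℝ × ℝ)) : Set C(ℝ, ℝ × ℝ) :=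
  closure {σ | ∃ h : ℝ, σ = translateCM h σ0}

/-- The multivalued process associated with the symbol `σ`:
`U_σ(t,τ,x) = {u(t) : u ∈ 𝒟_{τ,σ}(x)}`. -/
def Usol (σ : C(ℝ, ℝ × ℝ)) (t τ : ℝ) (x : Hsp) : Set Hsp :=
  {y | ∃ u : ℝ → Hsp,
      IsStrongSolution (fun s => (σ s).1) (fun s => (σ s).2) τ u ∧
      u τ = x ∧ y = u t}


/-- A bounded non-negative complete trajectory of the inclusion with symbol `σ`. -/
def IsNonnegCompleteTraj (σ : C(ℝ, ℝ × ℝ)) (γ : ℝ → Hsp) : Prop :=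
  (∀ τ : ℝ, IsStrongSolution (fun s => (σ s).1) (fun s => (σ s).2) τ γ) ∧
  ∀ t : ℝ, ∀ᵐ x ∂μ01, 0 ≤ γ t x

/-- A bounded function into `H`. -/
def BddTraj (φ : ℝ → Hsp) : Prop := ∃ M : ℝ, ∀ t : ℝ, ‖φ t‖ ≤ M

/-! ### Absolutely continuous curves -/

section AbsolutelyContinuous

lemma absolutelyContinuousOnInterval_of_dist_le_mul {X Y : Type*} [PseudoMetricSpace X]
    [PseudoMetricSpace Y] {f : ℝ → X} {g : ℝ → Y} {a b : ℝ} {K : NNReal}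
    (hf : AbsolutelyContinuousOnInterval f a b)
    (h : ∀ s ∈ uIcc a b, ∀ t ∈ uIcc a b, dist (g s) (g t) ≤ K * dist (f s) (f t)) :
    AbsolutelyContinuousOnInterval g a b := by
  rw [absolutelyContinuousOnInterval_iff] at hf ⊢
  intro ε hε
  obtain ⟨δ, hδ, hfδ⟩ := hf (ε / (K + 1)) (by positivity)
  refine ⟨δ, hδ, fun E hE hlen => ?_⟩
  calc ∑ i ∈ Finset.range E.1, dist (g (E.2 i).1) (g (E.2 i).2)
      ≤ ∑ i ∈ Finset.range E.1, K * dist (f (E.2 i).1) (f (E.2 i).2) :=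
        Finset.sum_le_sum fun i hi => h _ (hE.1 i hi).1 _ (hE.1 i hi).2
    _ ≤ (K + 1) * ∑ i ∈ Finset.range E.1, dist (f (E.2 i).1) (f (E.2 i).2) := by
        rw [← Finset.mul_sum]
        gcongr
        exact (lt_add_one _).le
    _ < ε := by
        rw [← lt_div_iff₀' (by positivity)]
        exact hfδ E hE hlen

lemma absolutelyContinuousOnInterval_lipschitzWith_comp {X Y : Type*} [PseudoMetricSpace X]
    [PseudoMetricSpace Y] {f : ℝ → X} {g : X → Y} {a b : ℝ} {K : NNReal} (hg : LipschitzWith K g)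
    (hf : AbsolutelyContinuousOnInterval f a b) :
    AbsolutelyContinuousOnInterval (fun t => g (f t)) a b :=
  absolutelyContinuousOnInterval_of_dist_le_mul hf fun s _ t _ => hg.dist_le_mul (f s) (f t)

lemma ae_mem_Ioo_of_mem_uIoc {a b : ℝ} (hab : a ≤ b) : ∀ᵐ x, x ∈ uIoc a b → x ∈ Ioo a b := by
  filter_upwards [Measure.ae_ne volume b] with x hxb hx
  rw [uIoc_of_le hab] at hx
  exact ⟨hx.1, hx.2.lt_of_ne hxb⟩

lemma le_of_ae_deriv_nonpos {f : ℝ → ℝ} {a b : ℝ} (hab : a ≤ b)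
    (hf : AbsolutelyContinuousOnInterval f a b) (h : ∀ᵐ t, t ∈ Ioo a b → deriv f t ≤ 0) :
    f b ≤ f a := by
  have hint : ∫ x in a..b, deriv f x ≤ 0 := by
    rw [intervalIntegral.integral_of_le hab, integral_Ioc_eq_integral_Ioo]
    exact setIntegral_nonpos_of_ae_restrict ((ae_restrict_iff' measurableSet_Ioo).2 h)
  linarith [hf.integral_deriv_eq_sub]

lemma sub_le_exp_mul_of_ae_deriv_le {f : ℝ → ℝ} {a b c δ : ℝ} (hab : a ≤ b)
    (hf : AbsolutelyContinuousOnInterval f a b)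
    (h : ∀ᵐ t, t ∈ Ioo a b → deriv f t ≤ -δ * (f t - c)) :
    f b - c ≤ Real.exp (-δ * (b - a)) * (f a - c) := by
  have hexp : AbsolutelyContinuousOnInterval (fun t => Real.exp (δ * (t - b))) a b :=
    ContDiffOn.absolutelyContinuousOnInterval (by fun_prop)
  have hfc : AbsolutelyContinuousOnInterval (fun t => f t - c) a b :=
    hf.sub contDiffOn_const.absolutelyContinuousOnInterval
  have hmono := le_of_ae_deriv_nonpos hab (hexp.fun_mul hfc) ?_
  · have e : δ * (a - b) = -δ * (b - a) := by ring
    simpa only [sub_self, mul_zero, Real.exp_zero, one_mul, e] using hmono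
  filter_upwards [h, hf.ae_differentiableAt] with t ht hdiff hmem
  have hd := (hdiff (Ioo_subset_Icc_self.trans Icc_subset_uIcc hmem)).hasDerivAt.sub_const c
  have he : HasDerivAt (fun t => Real.exp (δ * (t - b))) (Real.exp (δ * (t - b)) * δ) t := by
    simpa using (((hasDerivAt_id t).sub_const b).const_mul δ).exp
  rw [(he.fun_mul hd).deriv]
  nlinarith [ht hmem, Real.exp_pos (δ * (t - b))]

end AbsolutelyContinuous

lemma ae_deriv_eq_zero_of_eq_zero {E : Type*} [NormedAddCommGroup E] [NormedSpace ℝ E]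
    (f : ℝ → E) : ∀ᵐ x, f x = 0 → deriv f x = 0 := by
  -- the zeros of `f` that are isolated from the right are countably many; at the others, the
  -- derivative may be computed along zeros
  filter_upwards [(countable_setOfPred_isolated_right_within (s := {x | f x = 0})).ae_notMem volume]
    with x hx hfx
  by_cases hd : DifferentiableAt ℝ f x
  · have hacc : (nhdsWithin x ({x | f x = 0} ∩ Ioi x)).NeBot := ⟨fun h => hx ⟨hfx, h⟩⟩
    exact ((uniqueDiffWithinAt_iff_accPt.2 (accPt_principal_iff_nhdsWithin.2
      (hacc.mono (nhdsWithin_mono x fun y hy => ⟨hy.1, hy.2.ne'⟩)))).eq_deriv _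
        hd.hasDerivAt.hasDerivWithinAt
        ((hasDerivWithinAt_const x {x | f x = 0} 0).congr (fun y hy => hy) hfx))
  · exact deriv_zero_of_not_differentiableAt hd

section Wirtinger

variable {f f' : ℝ → ℝ} {a b : ℝ}

lemma sq_mul_integral_sq_le_of_mul_lt_pi {p : ℝ} (hp : 0 < p) (hab : a < b)
    (hpab : p * (b - a) < Real.pi) (hf : ContinuousOn f (Icc a b))
    (hf' : ContinuousOn f' (Icc a b)) (hderiv : ∀ x ∈ Ioo a b, HasDerivAt f (f' x) x)
    (ha : f a = 0) (hb : f b = 0) :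
    p ^ 2 * ∫ x in a..b, f x ^ 2 ≤ ∫ x in a..b, f' x ^ 2 := by
  -- `q' = p² + q²`, hence `f'² - p² f² + (q f²)'` is the square of `f' + q f`
  set q : ℝ → ℝ := fun x => p * Real.tan (p * (x - (a + b) / 2))
  have hcos : ∀ x ∈ Icc a b, Real.cos (p * (x - (a + b) / 2)) ≠ 0 := fun x hx =>
    (Real.cos_pos_of_mem_Ioo ⟨by nlinarith [hx.1], by nlinarith [hx.2]⟩).ne'
  have hq' : ∀ x ∈ Icc a b, HasDerivAt q (p ^ 2 + q x ^ 2) x := by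
    intro x hx
    have hlin : HasDerivAt (fun x => p * (x - (a + b) / 2)) p x := by
      simpa using ((hasDerivAt_id x).sub_const ((a + b) / 2)).const_mul p
    refine (((Real.hasDerivAt_tan (hcos x hx)).comp x hlin).const_mul p).congr_deriv ?_
    rw [← Real.inv_one_add_tan_sq (hcos x hx)]
    simp only [q]
    field_simp
  have hq : ContinuousOn q (Icc a b) := fun x hx => (hq' x hx).continuousAt.continuousWithinAt
  set D : ℝ → ℝ := fun x => (p ^ 2 + q x ^ 2) * f x ^ 2 + q x * (2 * f x * f' x)
  have hD : ContinuousOn D (Icc a b) := by fun_prop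
  have hDint : ∫ x in a..b, D x = 0 := by
    rw [intervalIntegral.integral_eq_sub_of_hasDerivAt_of_le hab.le (hq.mul (hf.pow 2))
      (fun x hx => ((hq' x (Ioo_subset_Icc_self hx)).mul ((hderiv x hx).pow 2)).congr_deriv
        (by simp [D])) (hD.intervalIntegrable_of_Icc hab.le)]
    simp [ha, hb]
  have hI : ∀ {g : ℝ → ℝ}, ContinuousOn g (Icc a b) → IntervalIntegrable g volume a b :=
    fun hg => hg.intervalIntegrable_of_Icc hab.le
  have hsq : 0 ≤ ∫ x in a..b, (f' x ^ 2 - p ^ 2 * f x ^ 2 + D x) := by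
    refine intervalIntegral.integral_nonneg hab.le fun x _ => ?_
    have : f' x ^ 2 - p ^ 2 * f x ^ 2 + D x = (f' x + q x * f x) ^ 2 := by ring
    rw [this]
    positivity
  rw [intervalIntegral.integral_add (hI (by fun_prop)) (hI hD), hDint,
    intervalIntegral.integral_sub (hI (by fun_prop)) (hI (by fun_prop)),
    intervalIntegral.integral_const_mul] at hsq
  linarith

lemma wirtinger_inequality (hab : a < b)
    (hf : ContinuousOn f (Icc a b)) (hf' : ContinuousOn f' (Icc a b))
    (hderiv : ∀ x ∈ Ioo a b, HasDerivAt f (f' x) x) (ha : f a = 0) (hb : f b = 0) :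
    (Real.pi / (b - a)) ^ 2 * ∫ x in a..b, f x ^ 2 ≤ ∫ x in a..b, f' x ^ 2 := by
  have hba : 0 < b - a := sub_pos.2 hab
  have hlim : Filter.Tendsto (fun p : ℝ => p ^ 2 * ∫ x in a..b, f x ^ 2)
      (nhdsWithin (Real.pi / (b - a)) (Iio (Real.pi / (b - a))))
      (nhds ((Real.pi / (b - a)) ^ 2 * ∫ x in a..b, f x ^ 2)) :=
    ((by fun_prop : Continuous fun p : ℝ => p ^ 2 * ∫ x in a..b, f x ^ 2).tendsto _).mono_left
      nhdsWithin_le_nhds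
  refine le_of_tendsto hlim ?_
  filter_upwards [Ioo_mem_nhdsLT (div_pos Real.pi_pos hba)] with p hp
  exact sq_mul_integral_sq_le_of_mul_lt_pi hp.1 hab ((lt_div_iff₀ hba).1 hp.2) hf hf' hderiv ha hb

end Wirtinger

/-- `u` is an antiderivative on `[a, b]`, in the sense of the Bochner integral, of the integrable
curve `u'`: the notion of absolutely continuous curve underlying strong solutions. -/
structure IsPrimitiveOn {E : Type*} [NormedAddCommGroup E] [NormedSpace ℝ E] (u u' : ℝ → E)
    (a b : ℝ) : Prop where
  le : a ≤ b
  intervalIntegrable : IntervalIntegrable u' volume a b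
  eq_add_integral : ∀ t ∈ Icc a b, u t = u a + ∫ s in a..t, u' s

namespace IsPrimitiveOn

variable {E : Type*} [NormedAddCommGroup E] [NormedSpace ℝ E] {u u' v v' : ℝ → E} {a b : ℝ}

lemma intervalIntegrable_of_mem (h : IsPrimitiveOn u u' a b) {t : ℝ} (ht : t ∈ Icc a b) :
    IntervalIntegrable u' volume a t :=
  h.intervalIntegrable.mono_set (uIcc_subset_uIcc left_mem_uIcc (Icc_subset_uIcc ht))

lemma of_hasDerivAt [CompleteSpace E] (hab : a ≤ b) (hu' : Continuous u')
    (h : ∀ t, HasDerivAt u (u' t) t) : IsPrimitiveOn u u' a b where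
  le := hab
  intervalIntegrable := hu'.intervalIntegrable a b
  eq_add_integral t _ := by
    rw [intervalIntegral.integral_eq_sub_of_hasDerivAt (fun s _ => h s)
      (hu'.intervalIntegrable a t), add_sub_cancel]

lemma sub (hu : IsPrimitiveOn u u' a b) (hv : IsPrimitiveOn v v' a b) :
    IsPrimitiveOn (fun t => u t - v t) (fun t => u' t - v' t) a b where
  le := hu.le
  intervalIntegrable := hu.intervalIntegrable.sub hv.intervalIntegrable
  eq_add_integral t ht := by
    rw [intervalIntegral.integral_sub (hu.intervalIntegrable_of_mem ht)
      (hv.intervalIntegrable_of_mem ht), hu.eq_add_integral t ht, hv.eq_add_integral t ht]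
    abel

lemma absolutelyContinuousOnInterval (h : IsPrimitiveOn u u' a b) :
    AbsolutelyContinuousOnInterval u a b := by
  refine absolutelyContinuousOnInterval_of_dist_le_mul (K := 1)
    (h.intervalIntegrable.norm.absolutelyContinuousOnInterval_intervalIntegral left_mem_uIcc)
    fun s hs t ht => ?_
  rw [uIcc_of_le h.le] at hs ht
  have hs' := h.intervalIntegrable_of_mem hs
  have ht' := h.intervalIntegrable_of_mem ht
  rw [h.eq_add_integral s hs, h.eq_add_integral t ht, dist_add_left, dist_eq_norm, dist_eq_norm,
    intervalIntegral.integral_interval_sub_left hs' ht',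
    intervalIntegral.integral_interval_sub_left hs'.norm ht'.norm, NNReal.coe_one, one_mul]
  exact intervalIntegral.norm_integral_le_abs_integral_norm

lemma ae_hasDerivAt [CompleteSpace E] (h : IsPrimitiveOn u u' a b) :
    ∀ᵐ t, t ∈ Ioo a b → HasDerivAt u (u' t) t := by
  filter_upwards [h.intervalIntegrable.ae_hasDerivAt_integral] with t ht hmem
  refine ((ht (Icc_subset_uIcc (Ioo_subset_Icc_self hmem)) a left_mem_uIcc).const_add
    (u a)).congr_of_eventuallyEq ?_
  filter_upwards [Icc_mem_nhds hmem.1 hmem.2] with s hs using h.eq_add_integral s hs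

end IsPrimitiveOn

/-! ### Positive parts in `L²` -/

section Lattice

variable {α : Type*} {m : MeasurableSpace α} {μ : Measure α}

lemma L2_real_inner_eq_integral (f g : Lp ℝ 2 μ) : inner ℝ f g = ∫ x, f x * g x ∂μ := by
  simp only [L2.inner_def, RCLike.inner_apply, conj_trivial, mul_comm]

lemma L2_real_inner_eq_integral_of_ae_eq {f g : Lp ℝ 2 μ} {f₀ g₀ : α → ℝ} (hf : f₀ =ᵐ[μ] f)
    (hg : g₀ =ᵐ[μ] g) : inner ℝ f g = ∫ x, f₀ x * g₀ x ∂μ := by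
  rw [L2_real_inner_eq_integral]
  exact integral_congr_ae (hf.mul hg).symm

lemma L2_inner_nonneg {f g : Lp ℝ 2 μ} (hf : 0 ≤ f) (hg : 0 ≤ g) : 0 ≤ inner ℝ f g := by
  rw [L2_real_inner_eq_integral]
  refine integral_nonneg_of_ae ?_
  filter_upwards [(Lp.coeFn_nonneg f).2 hf, (Lp.coeFn_nonneg g).2 hg] with x hfx hgx
    using mul_nonneg hfx hgx

lemma Lp_coeFn_real_posPart {p : ENNReal} (f : Lp ℝ p μ) : (fun x => max (f x) 0) =ᵐ[μ] ⇑f⁺ := by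
  filter_upwards [Lp.coeFn_sup f 0, Lp.coeFn_zero ℝ p μ] with x hsup hzero
  rw [posPart_def, hsup, Pi.sup_apply, hzero, Pi.zero_apply]

lemma L2_inner_posPart_negPart (f : Lp ℝ 2 μ) : inner ℝ f⁺ f⁻ = 0 := by
  rw [L2_real_inner_eq_integral_of_ae_eq (Lp_coeFn_real_posPart f)
    (posPart_neg f ▸ Lp_coeFn_real_posPart (-f))]
  refine integral_eq_zero_of_ae ?_
  filter_upwards [Lp.coeFn_neg f] with x hx
  rcases le_total (f x) 0 with h | h <;> simp only [hx, Pi.neg_apply] <;> simp [h]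

lemma L2_norm_sq_posPart_add_mem_Icc (f h : Lp ℝ 2 μ) :
    ‖(f + h)⁺‖ ^ 2 - ‖f⁺‖ ^ 2 - 2 * inner ℝ f⁺ h ∈ Icc 0 (‖h‖ ^ 2) := by
  constructor
  · have hcross : 0 ≤ inner ℝ f⁺ (f + h)⁻ := L2_inner_nonneg (posPart_nonneg _) (negPart_nonneg _)
    have hsplit : (f + h)⁻ = (f + h)⁺ - (f⁺ - f⁻) - h := by
      rw [posPart_sub_negPart, sub_sub, eq_sub_iff_add_eq', ← eq_sub_iff_add_eq,
        posPart_sub_negPart]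
    rw [hsplit, inner_sub_right, inner_sub_right, inner_sub_right, L2_inner_posPart_negPart,
      real_inner_self_eq_norm_sq] at hcross
    have hconv := norm_sub_sq_real (f + h)⁺ f⁺
    rw [real_inner_comm] at hconv
    nlinarith [sq_nonneg ‖(f + h)⁺ - f⁺‖]
  · have habs : |(f + h)⁺| ≤ |f⁺ + h| := by
      rw [abs_of_nonneg (posPart_nonneg _)]
      exact sup_le ((add_le_add_left (le_posPart f) h).trans (le_abs_self _)) (abs_nonneg _)
    have hnorm : ‖(f + h)⁺‖ ^ 2 ≤ ‖f⁺ + h‖ ^ 2 := by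
      gcongr
      exact norm_le_norm_of_abs_le_abs habs
    rw [norm_add_sq_real] at hnorm
    linarith

lemma hasFDerivAt_L2_norm_sq_posPart (f : Lp ℝ 2 μ) :
    HasFDerivAt (fun g : Lp ℝ 2 μ => ‖g⁺‖ ^ 2) ((2 : ℝ) • innerSL ℝ f⁺) f := by
  rw [hasFDerivAt_iff_isLittleO_nhds_zero]
  refine Asymptotics.IsBigO.trans_isLittleO (.of_bound 1 (.of_forall fun h => ?_))
    (Asymptotics.isLittleO_norm_pow_id one_lt_two)
  have hbound := L2_norm_sq_posPart_add_mem_Icc f h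
  simp only [FunLike.coe_smul, Pi.smul_apply, innerSL_apply_apply, smul_eq_mul]
  rw [Real.norm_of_nonneg hbound.1, one_mul, norm_pow, norm_norm]
  exact hbound.2

lemma nonpos_of_ae_inner_posPart_nonpos {z z' : ℝ → Lp ℝ 2 μ} {a b : ℝ}
    (hz : IsPrimitiveOn z z' a b) (hd : ∀ᵐ t, t ∈ Ioo a b → inner ℝ (z t)⁺ (z' t) ≤ 0)
    (ha : z a ≤ 0) : z b ≤ 0 := by
  have hnorm : AbsolutelyContinuousOnInterval (fun t => ‖(z t)⁺‖) a b :=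
    absolutelyContinuousOnInterval_lipschitzWith_comp (g := fun f : Lp ℝ 2 μ => ‖f⁺‖)
      (lipschitzWith_one_norm.comp lipschitzWith_posPart) hz.absolutelyContinuousOnInterval
  have hsq : AbsolutelyContinuousOnInterval (fun t => ‖(z t)⁺‖ ^ 2) a b := by
    simpa only [sq] using hnorm.fun_mul hnorm
  have hmono : ‖(z b)⁺‖ ^ 2 ≤ ‖(z a)⁺‖ ^ 2 := by
    refine le_of_ae_deriv_nonpos hz.le hsq ?_
    filter_upwards [hd, hz.ae_hasDerivAt] with t ht hdt hmem
    have h := (hasFDerivAt_L2_norm_sq_posPart (z t)).comp_hasDerivAt t (hdt hmem)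
    rw [Function.comp_def] at h
    simp only [h.deriv, FunLike.coe_smul, Pi.smul_apply, innerSL_apply_apply, smul_eq_mul]
    linarith [ht hmem]
  rw [posPart_eq_zero.2 ha, norm_zero, zero_pow two_ne_zero] at hmono
  exact posPart_eq_zero.1 (norm_eq_zero.1 (pow_eq_zero_iff two_ne_zero |>.1
    (hmono.antisymm (sq_nonneg _))))

lemma ae_deriv_eq_zero_of_eq_zero_of_nonneg [IsFiniteMeasure μ] {γ : ℝ → Lp ℝ 2 μ}
    {γ' : Lp ℝ 2 μ} {t : ℝ} (hd : HasDerivAt γ γ' t) (hγ : ∀ s, 0 ≤ γ s) :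
    ∀ᵐ x ∂μ, γ t x = 0 → γ' x = 0 := by
  have hZ : MeasurableSet {x | γ t x = 0} :=
    (Lp.stronglyMeasurable (γ t)).measurable (measurableSet_singleton 0)
  have hint : Integrable γ' μ := (Lp.memLp γ').integrable one_le_two
  refine (ae_restrict_iff' hZ).1 (hint.restrict.ae_eq_zero_of_forall_setIntegral_eq_zero
    fun s hs _ => ?_)
  rw [Measure.restrict_restrict hs]
  have hsZ := hs.inter hZ
  -- `s ↦ ∫ γ s` over a set where `γ t` vanishes is minimal at `t`
  have hmin : IsLocalMin
      (fun s => inner ℝ (indicatorConstLp 2 hsZ (measure_ne_top μ _) (1 : ℝ)) (γ s)) t := by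
    refine .of_forall fun r => ?_
    simp only [L2.inner_indicatorConstLp_one]
    rw [setIntegral_eq_zero_of_forall_eq_zero fun x hx => hx.2]
    exact setIntegral_nonneg_of_ae ((Lp.coeFn_nonneg _).2 (hγ r))
  have hinner : HasDerivAt
      (fun s => inner ℝ (indicatorConstLp 2 hsZ (measure_ne_top μ _) (1 : ℝ)) (γ s))
      (inner ℝ (indicatorConstLp 2 hsZ (measure_ne_top μ _) (1 : ℝ)) γ') t := by
    simpa using (hasDerivAt_const t _).inner ℝ hd
  rw [← L2.inner_indicatorConstLp_one (𝕜 := ℝ) hsZ (measure_ne_top μ _)]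
  exact hmin.hasDerivAt_eq_zero hinner

end Lattice

/-! ### The Dirichlet Laplacian on `(0, 1)` -/

instance : IsProbabilityMeasure μ01 := ⟨by simp [μ01]⟩

lemma ae_μ01_iff {p : ℝ → Prop} : (∀ᵐ x ∂μ01, p x) ↔ ∀ᵐ x, x ∈ Ioo (0 : ℝ) 1 → p x :=
  ae_restrict_iff' measurableSet_Ioo

lemma ae_μ01_mem_Ioo : ∀ᵐ x ∂μ01, x ∈ Ioo (0 : ℝ) 1 := ae_restrict_mem measurableSet_Ioo

lemma integral_μ01 (f : ℝ → ℝ) : ∫ x, f x ∂μ01 = ∫ x in (0 : ℝ)..1, f x := by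
  rw [intervalIntegral.integral_of_le zero_le_one, μ01, integral_Ioc_eq_integral_Ioo]

lemma le_of_ae_μ01_le {f g : ℝ → ℝ} (hf : ContinuousOn f (Ioo 0 1)) (hg : ContinuousOn g (Ioo 0 1))
    (h : f ≤ᵐ[μ01] g) {x : ℝ} (hx : x ∈ Ioo (0 : ℝ) 1) : f x ≤ g x := by
  have hmax : (fun x => max (f x) (g x)) =ᵐ[μ01] g := by
    filter_upwards [h] with x hx using max_eq_right hx
  exact max_eq_right_iff.1 (Measure.eqOn_open_of_ae_eq hmax isOpen_Ioo (hf.sup hg) hg hx)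

lemma intervalIntegrable_Hsp (w : Hsp) : IntervalIntegrable w volume 0 1 := by
  rw [intervalIntegrable_iff_integrableOn_Ioo_of_le zero_le_one]
  exact (Lp.memLp w).integrable one_le_two

/-- Pointwise data of `v ∈ H²(0,1) ∩ H¹₀(0,1)` with second derivative `w`: the continuous
representative `Z` of `v` and its derivative `G`, extended to an absolutely continuous function on
the closed interval `[0, 1]`. -/
structure IsDirichletProfile (Z G : ℝ → ℝ) (v w : Hsp) : Prop where
  continuousOn : ContinuousOn Z (Icc 0 1)
  left : Z 0 = 0
  right : Z 1 = 0
  ae_eq : Z =ᵐ[μ01] v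
  hasDerivAt : ∀ x ∈ Ioo (0 : ℝ) 1, HasDerivAt Z (G x) x
  absolutelyContinuousOnInterval_deriv : AbsolutelyContinuousOnInterval G 0 1
  ae_hasDerivAt_deriv : ∀ᵐ x, x ∈ Ioo (0 : ℝ) 1 → HasDerivAt G (w x) x

lemma InDomainA.exists_isDirichletProfile {v w : Hsp} (h : InDomainA v w) :
    ∃ Z G, IsDirichletProfile Z G v w := by
  obtain ⟨Z, hcont, h0, h1, hae, g, hg, hgw⟩ := h
  have hhalf : (1 / 2 : ℝ) ∈ uIcc (0 : ℝ) 1 := by rw [uIcc_of_le zero_le_one]; norm_num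
  have hw := intervalIntegrable_Hsp w
  refine ⟨Z, fun x => (∫ z in (1 / 2 : ℝ)..x, w z) + g (1 / 2), hcont, h0, h1, hae, ?_, ?_, ?_⟩
  · intro x hx
    rw [← hgw x hx (1 / 2) (by norm_num), sub_add_cancel]
    exact hg x hx
  · exact (hw.absolutelyContinuousOnInterval_intervalIntegral hhalf).add
      contDiffOn_const.absolutelyContinuousOnInterval
  · filter_upwards [hw.ae_hasDerivAt_integral] with x hx hmem
    exact (hx (Icc_subset_uIcc (Ioo_subset_Icc_self hmem)) _ hhalf).add_const _

namespace IsDirichletProfile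

variable {Z G : ℝ → ℝ} {v w : Hsp}

lemma continuousOn_deriv (h : IsDirichletProfile Z G v w) : ContinuousOn G (Icc 0 1) := by
  simpa only [uIcc_of_le zero_le_one] using h.absolutelyContinuousOnInterval_deriv.continuousOn

lemma absolutelyContinuousOnInterval (h : IsDirichletProfile Z G v w) :
    AbsolutelyContinuousOnInterval Z 0 1 := by
  obtain ⟨C, hC⟩ := isCompact_Icc.exists_bound_of_continuousOn h.continuousOn_deriv
  have hlip : LipschitzOnWith C.toNNReal Z (Ioo 0 1) :=
    (convex_Ioo 0 1).lipschitzOnWith_of_nnnorm_hasDerivWithin_le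
      (fun x hx => (h.hasDerivAt x hx).hasDerivWithinAt)
      fun x hx => NNReal.le_toNNReal_of_coe_le (hC x (Ioo_subset_Icc_self hx))
  have hclos := hlip.closure (by rw [closure_Ioo zero_ne_one]; exact h.continuousOn)
  rw [closure_Ioo zero_ne_one, ← uIcc_of_le zero_le_one] at hclos
  exact hclos.absolutelyContinuousOnInterval

lemma inner_eq_neg_integral (h : IsDirichletProfile Z G v w) {P Q : ℝ → ℝ} {f : Hsp}
    (hP : AbsolutelyContinuousOnInterval P 0 1) (hPf : P =ᵐ[μ01] f) (hP0 : P 0 = 0) (hP1 : P 1 = 0)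
    (hPQ : ∀ᵐ x, x ∈ Ioo (0 : ℝ) 1 → deriv P x * G x = Q x) :
    inner ℝ f w = -∫ x in (0 : ℝ)..1, Q x := by
  have hparts := hP.integral_mul_deriv_eq_deriv_mul h.absolutelyContinuousOnInterval_deriv
  rw [hP0, hP1, zero_mul, zero_mul, sub_zero, zero_sub] at hparts
  rw [L2_real_inner_eq_integral_of_ae_eq hPf .rfl, integral_μ01]
  calc ∫ x in (0 : ℝ)..1, P x * w x = ∫ x in (0 : ℝ)..1, P x * deriv G x := by
        refine intervalIntegral.integral_congr_ae ?_
        filter_upwards [h.ae_hasDerivAt_deriv, ae_mem_Ioo_of_mem_uIoc zero_le_one]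
          with x hx hmem hmem' using by rw [(hx (hmem hmem')).deriv]
    _ = -∫ x in (0 : ℝ)..1, deriv P x * G x := hparts
    _ = -∫ x in (0 : ℝ)..1, Q x := by
        congr 1
        refine intervalIntegral.integral_congr_ae ?_
        filter_upwards [hPQ, ae_mem_Ioo_of_mem_uIoc zero_le_one] with x hx hmem hmem'
          using hx (hmem hmem')

lemma inner_eq_neg_integral_deriv_mul (h : IsDirichletProfile Z G v w) {Y F : ℝ → ℝ} {f g : Hsp}
    (hY : IsDirichletProfile Y F f g) : inner ℝ f w = -∫ x in (0 : ℝ)..1, F x * G x :=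
  h.inner_eq_neg_integral hY.absolutelyContinuousOnInterval hY.ae_eq hY.left hY.right
    (.of_forall fun x hx => by rw [(hY.hasDerivAt x hx).deriv])

end IsDirichletProfile

namespace InDomainA

variable {v w v' w' : Hsp}

lemma sub (h : InDomainA v w) (h' : InDomainA v' w') : InDomainA (v - v') (w - w') := by
  obtain ⟨Z, hZ, hZ0, hZ1, hZv, g, hg, hgw⟩ := h
  obtain ⟨Z', hZ', hZ0', hZ1', hZv', g', hg', hgw'⟩ := h'
  refine ⟨fun x => Z x - Z' x, hZ.sub hZ', by simp [hZ0, hZ0'], by simp [hZ1, hZ1'], ?_,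
    fun x => g x - g' x, fun x hx => (hg x hx).sub (hg' x hx), fun x hx y hy => ?_⟩
  · filter_upwards [hZv, hZv', Lp.coeFn_sub v v'] with x hx hx' hsub
    rw [hsub, Pi.sub_apply, hx, hx']
  have hsub : uIoc y x ⊆ Ioo 0 1 := uIoc_subset_uIcc.trans (ordConnected_Ioo.uIcc_subset hy hx)
  have hint (f : Hsp) : IntervalIntegrable f volume y x :=
    (intervalIntegrable_Hsp f).mono_set (ordConnected_uIcc.uIcc_subset
      (Icc_subset_uIcc (Ioo_subset_Icc_self hy)) (Icc_subset_uIcc (Ioo_subset_Icc_self hx)))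
  rw [sub_sub_sub_comm, hgw x hx y hy, hgw' x hx y hy,
    ← intervalIntegral.integral_sub (hint w) (hint w')]
  refine (intervalIntegral.integral_congr_ae ?_).symm
  filter_upwards [ae_μ01_iff.1 (Lp.coeFn_sub w w')] with z hz hmem using hz (hsub hmem)

lemma inner_symm (h : InDomainA v w) (h' : InDomainA v' w') : inner ℝ v w' = inner ℝ v' w := by
  obtain ⟨Z, G, hZ⟩ := h.exists_isDirichletProfile
  obtain ⟨Z', G', hZ'⟩ := h'.exists_isDirichletProfile
  simp only [hZ.inner_eq_neg_integral_deriv_mul hZ', hZ'.inner_eq_neg_integral_deriv_mul hZ,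
    mul_comm]

lemma inner_le_neg_pi_sq_mul (h : InDomainA v w) : inner ℝ v w ≤ -Real.pi ^ 2 * ‖v‖ ^ 2 := by
  obtain ⟨Z, G, hZ⟩ := h.exists_isDirichletProfile
  have hw := wirtinger_inequality zero_lt_one hZ.continuousOn hZ.continuousOn_deriv hZ.hasDerivAt
    hZ.left hZ.right
  rw [hZ.inner_eq_neg_integral_deriv_mul hZ, ← real_inner_self_eq_norm_sq,
    L2_real_inner_eq_integral_of_ae_eq hZ.ae_eq hZ.ae_eq, integral_μ01]
  simp only [← sq, sub_zero, div_one] at hw ⊢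
  linarith

lemma inner_posPart_nonpos (h : InDomainA v w) : inner ℝ v⁺ w ≤ 0 := by
  obtain ⟨Z, G, hZ⟩ := h.exists_isDirichletProfile
  have hP : AbsolutelyContinuousOnInterval (fun x => max (Z x) 0) 0 1 :=
    absolutelyContinuousOnInterval_lipschitzWith_comp (g := fun z : ℝ => max z 0)
      (LipschitzWith.id.max_const 0) hZ.absolutelyContinuousOnInterval
  have hPv : (fun x => max (Z x) 0) =ᵐ[μ01] ⇑v⁺ := by
    filter_upwards [Lp_coeFn_real_posPart v, hZ.ae_eq] with x hx hZx
    rw [← hx, hZx]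
  rw [hZ.inner_eq_neg_integral (Q := fun x => if 0 < Z x then G x ^ 2 else 0) hP hPv
    (by simp [hZ.left]) (by simp [hZ.right]), Left.neg_nonpos_iff]
  · exact intervalIntegral.integral_nonneg zero_le_one fun x _ => by positivity
  refine .of_forall fun x hx => ?_
  have hd := hZ.hasDerivAt x hx
  split_ifs with hpos
  · have : (fun x => max (Z x) 0) =ᶠ[nhds x] Z := by
      filter_upwards [hd.continuousAt.eventually (lt_mem_nhds hpos)] with y hy
        using max_eq_left hy.le
    rw [this.deriv_eq, hd.deriv, sq]
  · have : IsLocalMin (fun x => max (Z x) 0) x := .of_forall fun y => by simp [not_lt.1 hpos]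
    rw [this.deriv_eq_zero, zero_mul]

lemma ae_eq_zero_of_eq_zero (h : InDomainA v w) (hv : 0 ≤ v) : ∀ᵐ x ∂μ01, v x = 0 → w x = 0 := by
  obtain ⟨Z, G, hZ⟩ := h.exists_isDirichletProfile
  have hZ_nonneg : ∀ x ∈ Ioo (0 : ℝ) 1, 0 ≤ Z x := by
    refine fun x => le_of_ae_μ01_le continuousOn_const (hZ.continuousOn.mono Ioo_subset_Icc_self) ?_
    filter_upwards [hZ.ae_eq, (Lp.coeFn_nonneg v).2 hv] with y hy hvy using hy ▸ hvy
  have hG : ∀ x ∈ Ioo (0 : ℝ) 1, Z x = 0 → G x = 0 := fun x hx hzero => by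
    refine IsLocalMin.hasDerivAt_eq_zero (f := Z) ?_ (hZ.hasDerivAt x hx)
    filter_upwards [isOpen_Ioo.mem_nhds hx] with y hy using hzero ▸ hZ_nonneg y hy
  filter_upwards [hZ.ae_eq, ae_μ01_mem_Ioo, ae_μ01_iff.2 hZ.ae_hasDerivAt_deriv,
    ae_restrict_of_ae (ae_deriv_eq_zero_of_eq_zero G)] with x hx hmem hd hderiv hzero
  rw [← hd.deriv]
  exact hderiv (hG x hmem (hx.trans hzero))

end InDomainA

open scoped BoundedContinuousFunction

/-- The embedding of bounded continuous functions on the line into `H = L²(0,1)`. -/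
abbrev toH : (ℝ →ᵇ ℝ) →L[ℝ] Hsp := BoundedContinuousFunction.toLp 2 μ01 ℝ

lemma inDomainA_toH {f f'' : ℝ →ᵇ ℝ} {f' : ℝ → ℝ}
    (hf : ∀ x, HasDerivAt f (f' x) x) (hf' : ∀ x, HasDerivAt f' (f'' x) x)
    (h0 : f 0 = 0) (h1 : f 1 = 0) : InDomainA (toH f) (toH f'') := by
  refine ⟨f, f.continuous.continuousOn, h0, h1,
    (BoundedContinuousFunction.coeFn_toLp 2 μ01 ℝ f).symm, f', fun x _ => hf x, fun x hx y hy => ?_⟩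
  have hsub : uIoc y x ⊆ Ioo 0 1 := uIoc_subset_uIcc.trans (ordConnected_Ioo.uIcc_subset hy hx)
  rw [← intervalIntegral.integral_eq_sub_of_hasDerivAt (fun z _ => hf' z)
    (f''.continuous.intervalIntegrable y x)]
  refine (intervalIntegral.integral_congr_ae ?_).symm
  filter_upwards [ae_μ01_iff.1 (BoundedContinuousFunction.coeFn_toLp 2 μ01 ℝ f'')] with z hz hmem
    using hz (hsub hmem)

lemma inDomainA_zero : InDomainA 0 0 := by
  simpa using inDomainA_toH (f := 0) (f' := 0) (f'' := 0) (fun x => hasDerivAt_const x 0)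
    (fun x => hasDerivAt_const x 0) rfl rfl

/-- The first Dirichlet eigenfunction `x ↦ sin (π x)`. -/
def sineMode : ℝ →ᵇ ℝ :=
  .ofNormedAddCommGroup (fun x => Real.sin (Real.pi * x)) (by fun_prop) 1
    fun x => Real.abs_sin_le_one (Real.pi * x)

lemma sineMode_apply (x : ℝ) : sineMode x = Real.sin (Real.pi * x) := rfl

lemma sineMode_pos {x : ℝ} (hx : x ∈ Ioo (0 : ℝ) 1) : 0 < sineMode x :=
  Real.sin_pos_of_pos_of_lt_pi (mul_pos Real.pi_pos hx.1)
    (mul_lt_of_lt_one_right Real.pi_pos hx.2)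

lemma inDomainA_sineMode : InDomainA (toH sineMode) (-Real.pi ^ 2 • toH sineMode) := by
  rw [← map_smul]
  have hlin (x : ℝ) : HasDerivAt (fun x => Real.pi * x) Real.pi x := by
    simpa using (hasDerivAt_id x).const_mul Real.pi
  refine inDomainA_toH (f' := fun x => Real.pi * Real.cos (Real.pi * x)) (fun x => ?_)
    (fun x => ?_) (by simp [sineMode_apply]) (by simp [sineMode_apply])
  · exact (hlin x).sin.congr_deriv (mul_comm _ _)
  · refine ((hlin x).cos.const_mul Real.pi).congr_deriv ?_
    simp only [BoundedContinuousFunction.coe_smul, sineMode_apply, smul_eq_mul]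
    ring

lemma InDomainA.inner_sineMode {v w : Hsp} (h : InDomainA v w) :
    inner ℝ (toH sineMode) w = -Real.pi ^ 2 * inner ℝ (toH sineMode) v := by
  rw [inDomainA_sineMode.inner_symm h, inner_smul_right, real_inner_comm]

/-! ### The strong maximum principle -/

section Translation

/-- The translate `x ↦ f (x - c)` of a bounded continuous function on the line. -/
def translateBCF (f : ℝ →ᵇ ℝ) (c : ℝ) : ℝ →ᵇ ℝ :=
  f.compContinuous ⟨fun x => x - c, continuous_sub_right c⟩

@[simp]
lemma translateBCF_apply (f : ℝ →ᵇ ℝ) (c x : ℝ) : translateBCF f c x = f (x - c) := rfl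

lemma continuous_translateBCF {f : ℝ →ᵇ ℝ} (hf : UniformContinuous f) :
    Continuous (translateBCF f) := by
  refine Metric.continuous_iff.2 fun c ε hε => ?_
  obtain ⟨δ, hδ, hfδ⟩ := Metric.uniformContinuous_iff.1 hf (ε / 2) (half_pos hε)
  refine ⟨δ, hδ, fun d hd => lt_of_le_of_lt ?_ (half_lt_self hε)⟩
  refine (BoundedContinuousFunction.dist_le (half_pos hε).le).2 fun x => (hfδ ?_).le
  simpa only [ContinuousMap.coe_mk, dist_sub_left] using hd

lemma hasDerivAt_translateBCF {f f' : ℝ →ᵇ ℝ} (hd : ∀ x, HasDerivAt f (f' x) x)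
    (hf' : UniformContinuous f') (c : ℝ) :
    HasDerivAt (translateBCF f) (-translateBCF f' c) c := by
  rw [hasDerivAt_iff_isLittleO_nhds_zero, Asymptotics.isLittleO_iff]
  intro ε hε
  obtain ⟨δ, hδ, hfδ⟩ := Metric.uniformContinuous_iff.1 hf' ε hε
  filter_upwards [Metric.ball_mem_nhds 0 hδ] with s hs
  rw [mem_ball_iff_norm, Real.norm_eq_abs] at hs
  refine (BoundedContinuousFunction.norm_le (by positivity)).2 fun x => ?_
  have hmvt := (convex_uIcc 0 s).norm_image_sub_le_of_norm_hasDerivWithin_le (C := ε)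
    (f := fun r => f (x - c - r) + r * f' (x - c)) (f' := fun r => -f' (x - c - r) + f' (x - c))
    (fun r _ => ?_) (fun r hr => ?_) left_mem_uIcc right_mem_uIcc
  · refine (congrArg norm ?_).trans_le (by simpa only [sub_zero] using hmvt)
    simp only [BoundedContinuousFunction.coe_sub, Pi.sub_apply, BoundedContinuousFunction.coe_smul,
      BoundedContinuousFunction.coe_neg, Pi.neg_apply, translateBCF_apply, smul_eq_mul]
    ring_nf
  · have h := ((hd (x - c - r)).comp r ((hasDerivAt_id r).const_sub (x - c))).add
      ((hasDerivAt_id r).mul_const (f' (x - c)))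
    exact (h.congr_deriv (by simp)).hasDerivWithinAt
  · rw [neg_add_eq_sub, ← dist_eq_norm]
    refine (hfδ ?_).le
    rw [dist_self_sub_right, Real.norm_eq_abs]
    simpa only [sub_zero] using (abs_sub_left_of_mem_uIcc hr).trans_lt hs

end Translation

section Bump

lemma hasDerivAt_max_zero_pow (n : ℕ) (s : ℝ) :
    HasDerivAt (fun s : ℝ => max s 0 ^ (n + 2)) ((n + 2) * max s 0 ^ (n + 1)) s := by
  refine hasDerivAt_of_hasDerivAt_of_ne' (f := fun s : ℝ => max s 0 ^ (n + 2))
    (g := fun s => (n + 2) * max s 0 ^ (n + 1)) (x := 0) (fun y hy => ?_) (by fun_prop)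
    (by fun_prop) s
  rcases hy.lt_or_gt with hneg | hpos
  · refine ((hasDerivAt_const y (0 : ℝ)).congr_of_eventuallyEq ?_).congr_deriv
      (by simp [max_eq_right hneg.le])
    filter_upwards [gt_mem_nhds hneg] with z hz
    simp [max_eq_right hz.le]
  · refine ((hasDerivAt_pow (n + 2) y).congr_of_eventuallyEq ?_).congr_deriv
      (by simp [max_eq_left hpos.le])
    filter_upwards [lt_mem_nhds hpos] with z hz
    rw [max_eq_left hz.le]

lemma hasCompactSupport_cap (ρ : ℝ) : HasCompactSupport fun y : ℝ => max (ρ ^ 2 - y ^ 2) 0 := by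
  refine HasCompactSupport.intro (isCompact_Icc (a := -|ρ|) (b := |ρ|)) fun y hy => ?_
  rw [mem_Icc, ← abs_le, not_le] at hy
  exact max_eq_right (sub_nonpos.2 (sq_le_sq.2 hy.le))

/-- The function `g` cut off by the factor `(ρ² - y²)₊`. -/
def cutoff (ρ : ℝ) (g : ℝ → ℝ) (hg : Continuous g) : ℝ →ᵇ ℝ :=
  ofCompactSupport (fun y => g y * max (ρ ^ 2 - y ^ 2) 0) (by fun_prop)
    (hasCompactSupport_cap ρ).mul_left

lemma uniformContinuous_cutoff (ρ : ℝ) {g : ℝ → ℝ} (hg : Continuous g) :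
    UniformContinuous (cutoff ρ g hg) :=
  (hasCompactSupport_cap ρ).mul_left.uniformContinuous_of_continuous (cutoff ρ g hg).continuous

/-- The `C²` bump `(ρ² - y²)₊³`, supported in `[-ρ, ρ]`. -/
def bump (ρ : ℝ) : ℝ →ᵇ ℝ := cutoff ρ (fun y => max (ρ ^ 2 - y ^ 2) 0 ^ 2) (by fun_prop)

/-- The derivative of `bump ρ`. -/
def bumpDeriv (ρ : ℝ) : ℝ →ᵇ ℝ :=
  cutoff ρ (fun y => -6 * y * max (ρ ^ 2 - y ^ 2) 0) (by fun_prop)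

/-- The second derivative of `bump ρ`. -/
def bumpDeriv₂ (ρ : ℝ) : ℝ →ᵇ ℝ :=
  cutoff ρ (fun y => 24 * y ^ 2 - 6 * max (ρ ^ 2 - y ^ 2) 0) (by fun_prop)

lemma bump_apply (ρ y : ℝ) : bump ρ y = max (ρ ^ 2 - y ^ 2) 0 ^ 3 := (pow_succ _ 2).symm

lemma bump_nonneg (ρ y : ℝ) : 0 ≤ bump ρ y := by
  rw [bump_apply]
  positivity

lemma bump_eq_zero {ρ y : ℝ} (h : |ρ| ≤ |y|) : bump ρ y = 0 := by
  rw [bump_apply, max_eq_right (sub_nonpos.2 (sq_le_sq.2 h)), zero_pow three_ne_zero]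

lemma bump_zero_pos {ρ : ℝ} (hρ : ρ ≠ 0) : 0 < bump ρ 0 := by
  rw [bump_apply]
  simp only [zero_pow two_ne_zero, sub_zero]
  positivity

lemma bump_le_bump_zero (ρ y : ℝ) : bump ρ y ≤ bump ρ 0 := by
  simp only [bump_apply]
  exact pow_le_pow_left₀ (le_max_right _ _) (max_le_max_right 0 (by nlinarith [sq_nonneg y])) 3

lemma hasDerivAt_cap (ρ y : ℝ) : HasDerivAt (fun y : ℝ => ρ ^ 2 - y ^ 2) (-2 * y) y := by
  simpa using (hasDerivAt_pow 2 y).const_sub (ρ ^ 2)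

lemma hasDerivAt_bump (ρ y : ℝ) : HasDerivAt (bump ρ) (bumpDeriv ρ y) y := by
  rw [show ⇑(bump ρ) = fun y => max (ρ ^ 2 - y ^ 2) 0 ^ (1 + 2) from funext (bump_apply ρ)]
  refine ((hasDerivAt_max_zero_pow 1 _).comp y (hasDerivAt_cap ρ y)).congr_deriv ?_
  change _ = -6 * y * max (ρ ^ 2 - y ^ 2) 0 * max (ρ ^ 2 - y ^ 2) 0
  push_cast
  ring

lemma hasDerivAt_bumpDeriv (ρ y : ℝ) : HasDerivAt (bumpDeriv ρ) (bumpDeriv₂ ρ y) y := by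
  have hsq := (hasDerivAt_max_zero_pow 0 _).comp y (hasDerivAt_cap ρ y)
  have h := ((hasDerivAt_id y).const_mul (-6)).mul hsq
  refine (h.congr_deriv ?_).congr_of_eventuallyEq (.of_forall fun z => ?_)
  · change _ = (24 * y ^ 2 - 6 * max (ρ ^ 2 - y ^ 2) 0) * max (ρ ^ 2 - y ^ 2) 0
    simp only [id, Function.comp_apply]
    push_cast
    ring
  · change -6 * z * max (ρ ^ 2 - z ^ 2) 0 * max (ρ ^ 2 - z ^ 2) 0 =
      -6 * z * max (ρ ^ 2 - z ^ 2) 0 ^ 2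
    ring

/-- Moving with velocity `κ` and shrinking at rate `lam`, the bump is a subsolution of the heat
equation. -/
lemma exists_bump_decay_rate {ρ : ℝ} (hρ : 0 < ρ) (κ : ℝ) :
    ∃ lam : ℝ, ∀ y, -lam * bump ρ y - κ * bumpDeriv ρ y ≤ bumpDeriv₂ ρ y := by
  set A := 6 * |κ| * ρ + 30
  refine ⟨A ^ 2 / (96 * ρ ^ 2), fun y => ?_⟩
  change _ - κ * (-6 * y * max (ρ ^ 2 - y ^ 2) 0 * max (ρ ^ 2 - y ^ 2) 0) ≤
    (24 * y ^ 2 - 6 * max (ρ ^ 2 - y ^ 2) 0) * max (ρ ^ 2 - y ^ 2) 0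
  rw [bump_apply]
  rcases le_total (ρ ^ 2) (y ^ 2) with h | h
  · simp [max_eq_right (sub_nonpos.2 h)]
  rw [max_eq_left (sub_nonneg.2 h)]
  set m := ρ ^ 2 - y ^ 2 with hm
  have hm0 : 0 ≤ m := sub_nonneg.2 h
  have hκy : κ * y ≤ |κ| * ρ :=
    (le_abs_self _).trans (abs_mul κ y ▸ by gcongr; exact abs_le_of_sq_le_sq h hρ.le)
  have hsq : 0 ≤ A ^ 2 / (96 * ρ ^ 2) * m ^ 2 - A * m + 24 * ρ ^ 2 := by
    have : A ^ 2 / (96 * ρ ^ 2) * m ^ 2 - A * m + 24 * ρ ^ 2 =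
        (A * m - 48 * ρ ^ 2) ^ 2 / (96 * ρ ^ 2) := by
      field_simp
      ring
    rw [this]
    positivity
  nlinarith [hm, mul_nonneg hm0 hsq, mul_nonneg (sq_nonneg m) (sub_nonneg.2 hκy)]

end Bump

section MaximumPrinciple

variable {u u' β β' : ℝ → Hsp} {a b : ℝ}

/-- `u` is a supersolution of the heat equation with Dirichlet boundary conditions on `[a, b]`,
with time derivative `u'`. -/
structure IsSupersolutionOn (u u' : ℝ → Hsp) (a b : ℝ) : Prop extends IsPrimitiveOn u u' a b where
  ae_le : ∀ᵐ t, t ∈ Ioo a b → ∃ w, InDomainA (u t) w ∧ w ≤ u' t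

lemma IsSupersolutionOn.le_of_subsolution (hu : IsSupersolutionOn u u' a b)
    (hβ : IsPrimitiveOn β β' a b)
    (hsub : ∀ᵐ t, t ∈ Ioo a b → ∃ w, InDomainA (β t) w ∧ β' t ≤ w) (ha : β a ≤ u a) :
    β b ≤ u b := by
  refine sub_nonpos.1 (nonpos_of_ae_inner_posPart_nonpos (hβ.sub hu.toIsPrimitiveOn) ?_
    (sub_nonpos.2 ha))
  filter_upwards [hsub, hu.ae_le] with t hβt hut hmem
  obtain ⟨w, hw, hβw⟩ := hβt hmem
  obtain ⟨w', hw', hwu⟩ := hut hmem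
  have hneg : 0 ≤ inner ℝ (β t - u t)⁺ ((w - w') - (β' t - u' t)) :=
    L2_inner_nonneg (posPart_nonneg _) (sub_nonneg.2 (sub_le_sub hβw hwu))
  rw [inner_sub_right] at hneg
  exact (sub_nonneg.1 hneg).trans (hw.sub hw').inner_posPart_nonpos

lemma toH_mono {f g : ℝ →ᵇ ℝ} (h : ∀ x, f x ≤ g x) : toH f ≤ toH g := by
  refine (Lp.coeFn_le _ _).1 ?_
  filter_upwards [BoundedContinuousFunction.coeFn_toLp 2 μ01 ℝ f,
    BoundedContinuousFunction.coeFn_toLp 2 μ01 ℝ g] with x hf hg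
  rw [hf, hg]
  exact h x

lemma inDomainA_translate_bump {ρ c : ℝ} (hρ : 0 < ρ) (hc : c ∈ Icc ρ (1 - ρ)) (k : ℝ) :
    InDomainA (toH (k • translateBCF (bump ρ) c)) (toH (k • translateBCF (bumpDeriv₂ ρ) c)) := by
  have hshift (x : ℝ) : HasDerivAt (fun x => x - c) 1 x := (hasDerivAt_id x).sub_const c
  have hleft : bump ρ (0 - c) = 0 := by
    refine bump_eq_zero ?_
    rw [zero_sub, abs_neg, abs_of_pos hρ]
    exact hc.1.trans (le_abs_self c)
  have hright : bump ρ (1 - c) = 0 := by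
    refine bump_eq_zero ?_
    rw [abs_of_pos hρ]
    exact (le_sub_comm.1 hc.2).trans (le_abs_self _)
  refine inDomainA_toH (f' := fun x => k * bumpDeriv ρ (x - c)) (fun x => ?_) (fun x => ?_)
    (mul_eq_zero_of_right k hleft) (mul_eq_zero_of_right k hright)
  · exact (((hasDerivAt_bump ρ (x - c)).comp x (hshift x)).const_mul k).congr_deriv
      (by rw [mul_one])
  · exact (((hasDerivAt_bumpDeriv ρ (x - c)).comp x (hshift x)).const_mul k).congr_deriv
      (by rw [mul_one]; rfl)

/-- The bump travelling with velocity `κ` from the centre `c` at time `0`, damped at rate `lam`. -/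
def movingBump (ρ lam κ c t : ℝ) : ℝ →ᵇ ℝ :=
  Real.exp (-lam * t) • translateBCF (bump ρ) (c + κ * t)

/-- The time derivative of `movingBump ρ lam κ c`. -/
def movingBumpDeriv (ρ lam κ c t : ℝ) : ℝ →ᵇ ℝ :=
  Real.exp (-lam * t) • (-lam • translateBCF (bump ρ) (c + κ * t) -
    κ • translateBCF (bumpDeriv ρ) (c + κ * t))

lemma hasDerivAt_movingBump (ρ lam κ c t : ℝ) :
    HasDerivAt (movingBump ρ lam κ c) (movingBumpDeriv ρ lam κ c t) t := by
  have hamp : HasDerivAt (fun t => Real.exp (-lam * t)) (Real.exp (-lam * t) * -lam) t := by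
    simpa using ((hasDerivAt_id t).const_mul (-lam)).exp
  have hcenter : HasDerivAt (fun t => c + κ * t) κ t := by
    simpa using ((hasDerivAt_id t).const_mul κ).const_add c
  have htranslate := (hasDerivAt_translateBCF (hasDerivAt_bump ρ) (uniformContinuous_cutoff ρ _)
    (c + κ * t)).scomp t hcenter
  refine (hamp.smul htranslate).congr_deriv ?_
  simp only [movingBumpDeriv, Function.comp_apply]
  module

lemma continuous_movingBumpDeriv (ρ lam κ c : ℝ) : Continuous (movingBumpDeriv ρ lam κ c) := by
  have hbump : Continuous (translateBCF (bump ρ)) :=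
    continuous_translateBCF (uniformContinuous_cutoff ρ _)
  have hderiv : Continuous (translateBCF (bumpDeriv ρ)) :=
    continuous_translateBCF (uniformContinuous_cutoff ρ _)
  unfold movingBumpDeriv
  fun_prop

lemma IsSupersolutionOn.exists_smul_bump_le (hu : IsSupersolutionOn u u' a b) (hab : a < b)
    {ρ x₀ x₁ ε : ℝ} (hρ : 0 < ρ) (hx₀ : x₀ ∈ Icc ρ (1 - ρ)) (hx₁ : x₁ ∈ Icc ρ (1 - ρ))
    (hε : 0 < ε) (ha : toH (ε • translateBCF (bump ρ) x₀) ≤ u a) :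
    ∃ δ : ℝ, 0 < δ ∧ toH (δ • translateBCF (bump ρ) x₁) ≤ u b := by
  set κ := (x₁ - x₀) / (b - a)
  set c := x₀ - κ * a
  have hca : c + κ * a = x₀ := sub_add_cancel _ _
  have hcb : c + κ * b = x₁ := by
    simp only [c, κ]
    field_simp [sub_ne_zero.2 hab.ne']
    ring
  have hmem : MapsTo (fun t => c + κ * t) (Ioo a b) (Icc ρ (1 - ρ)) := fun t ht => by
    have hfrac : (t - a) / (b - a) ∈ Icc (0 : ℝ) 1 :=
      ⟨by have := ht.1; bound, div_le_one_of_le₀ (by linarith [ht.2]) (by linarith)⟩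
    convert (convex_Icc ρ (1 - ρ)).add_smul_sub_mem hx₀ hx₁ hfrac using 1
    simp only [c, κ, smul_eq_mul]
    ring
  obtain ⟨lam, hlam⟩ := exists_bump_decay_rate hρ κ
  set ε₀ := ε * Real.exp (lam * a)
  refine ⟨ε₀ * Real.exp (-lam * b), by positivity, ?_⟩
  rw [mul_smul, ← hcb]
  refine hu.le_of_subsolution (β := fun t => toH (ε₀ • movingBump ρ lam κ c t))
    (.of_hasDerivAt hab.le (toH.continuous.comp ((continuous_movingBumpDeriv ρ lam κ c).const_smul
      ε₀)) fun t => toH.hasFDerivAt.comp_hasDerivAt t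
        ((hasDerivAt_movingBump ρ lam κ c t).const_smul ε₀)) (.of_forall fun t ht => ?_) ?_
  · simp only [movingBump, smul_smul]
    refine ⟨_, inDomainA_translate_bump hρ (hmem ht) _, toH_mono fun x => ?_⟩
    exact (mul_assoc _ _ _).symm.trans_le
      (mul_le_mul_of_nonneg_left (hlam (x - (c + κ * t))) (by positivity))
  · rwa [movingBump, hca, smul_smul, mul_assoc, ← Real.exp_add, neg_mul, add_neg_cancel,
      Real.exp_zero, mul_one]

lemma InDomainA.exists_ball_le {v w : Hsp} (h : InDomainA v w) (hv : 0 ≤ v) (hv0 : v ≠ 0) :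
    ∃ x₀ ∈ Ioo (0 : ℝ) 1, ∃ m > 0, ∃ r > 0, ∀ᵐ x ∂μ01, |x - x₀| < r → m ≤ v x := by
  obtain ⟨Z, G, hZ⟩ := h.exists_isDirichletProfile
  have hne : ¬ v =ᵐ[μ01] 0 := fun hzero => hv0 (Lp.eq_zero_iff_ae_eq_zero.2 hzero)
  obtain ⟨x₀, hx₀, hpos⟩ : ∃ x₀ ∈ Ioo (0 : ℝ) 1, 0 < Z x₀ := by
    by_contra! hle
    refine hne ?_
    filter_upwards [hZ.ae_eq, ae_μ01_mem_Ioo, (Lp.coeFn_nonneg v).2 hv] with x hx hmem hnonneg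
    exact (hx ▸ hle x hmem).antisymm hnonneg
  have hcont : ContinuousAt Z x₀ := (hZ.hasDerivAt x₀ hx₀).continuousAt
  obtain ⟨r, hr, hball⟩ := Metric.eventually_nhds_iff.1
    (hcont.eventually (lt_mem_nhds (half_lt_self hpos)))
  refine ⟨x₀, hx₀, Z x₀ / 2, half_pos hpos, r, hr, ?_⟩
  filter_upwards [hZ.ae_eq] with x hx hxr using hx ▸ (hball hxr).le

lemma toH_smul_bump_le {ρ c m : ℝ} {v : Hsp} (hρ : ρ ≠ 0) (hm : 0 < m) (hv : 0 ≤ v)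
    (h : ∀ᵐ x ∂μ01, |x - c| < |ρ| → m ≤ v x) :
    ∃ ε : ℝ, 0 < ε ∧ toH (ε • translateBCF (bump ρ) c) ≤ v := by
  refine ⟨m / bump ρ 0, div_pos hm (bump_zero_pos hρ), (Lp.coeFn_le _ _).1 ?_⟩
  filter_upwards [BoundedContinuousFunction.coeFn_toLp 2 μ01 ℝ
    ((m / bump ρ 0) • translateBCF (bump ρ) c), h, (Lp.coeFn_nonneg v).2 hv] with x hx hle hnonneg
  rw [hx]
  change m / bump ρ 0 * bump ρ (x - c) ≤ v x
  rcases lt_or_ge |x - c| |ρ| with hlt | hge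
  · refine le_trans ?_ (hle hlt)
    rw [div_mul_eq_mul_div]
    exact div_le_of_le_mul₀ (bump_nonneg _ _) hm.le
      (mul_le_mul_of_nonneg_left (bump_le_bump_zero ρ _) hm.le)
  · rw [bump_eq_zero hge, mul_zero]
    exact hnonneg

/-- A small bump below `u a`, placed near a point where `u a` is positive, slides to any prescribed
point `x₁` while staying below `u`. -/
lemma IsSupersolutionOn.ae_pos (hu : IsSupersolutionOn u u' a b) (hab : a < b) {w w' : Hsp}
    (hwa : InDomainA (u a) w) (hwb : InDomainA (u b) w') (ha : 0 ≤ u a) (ha0 : u a ≠ 0) :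
    ∀ᵐ x ∂μ01, 0 < u b x := by
  obtain ⟨x₀, hx₀, m, hm, r, hr, hball⟩ := hwa.exists_ball_le ha ha0
  obtain ⟨Z, G, hZ⟩ := hwb.exists_isDirichletProfile
  filter_upwards [hZ.ae_eq, ae_μ01_mem_Ioo] with x₁ hZx₁ hx₁
  obtain ⟨ρ, hρ, hρlt⟩ : ∃ ρ > 0, ρ < min r (min (min x₀ (1 - x₀)) (min x₁ (1 - x₁))) :=
    exists_between (by simp [hr, hx₀.1, hx₀.2, hx₁.1, hx₁.2])
  simp only [lt_min_iff] at hρlt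
  obtain ⟨hρr, ⟨hρ₀, hρ₀'⟩, hρ₁, hρ₁'⟩ := hρlt
  obtain ⟨ε, hε, hεle⟩ := toH_smul_bump_le hρ.ne' hm ha (c := x₀) <| by
    filter_upwards [hball] with x hx hlt using hx (hlt.trans ((abs_of_pos hρ).trans_lt hρr))
  obtain ⟨δ, hδ, hδle⟩ := hu.exists_smul_bump_le hab hρ ⟨hρ₀.le, le_sub_comm.1 hρ₀'.le⟩
    ⟨hρ₁.le, le_sub_comm.1 hρ₁'.le⟩ hε hεle
  have hle : ⇑(δ • translateBCF (bump ρ) x₁) ≤ᵐ[μ01] Z :=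
    (BoundedContinuousFunction.coeFn_toLp 2 μ01 ℝ _).symm.trans_le
      (((Lp.coeFn_le _ _).2 hδle).trans_eq hZ.ae_eq.symm)
  rw [← hZx₁]
  refine lt_of_lt_of_le ?_ (le_of_ae_μ01_le (map_continuous _).continuousOn
    (hZ.continuousOn.mono Ioo_subset_Icc_self) hle hx₁)
  change 0 < δ * bump ρ (x₁ - x₁)
  rw [sub_self]
  exact mul_pos hδ (bump_zero_pos hρ.ne')

end MaximumPrinciple

/-! ### Energy estimates for nonnegative trajectories -/

lemma IsPrimitiveOn.norm_sq_le {E : Type*} [NormedAddCommGroup E] [InnerProductSpace ℝ E]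
    [CompleteSpace E] {z z' : ℝ → E} {a b δ η : ℝ} (hz : IsPrimitiveOn z z' a b) (hδ : 0 < δ)
    (h : ∀ᵐ t, t ∈ Ioo a b → inner ℝ (z t) (z' t) ≤ -δ * ‖z t‖ ^ 2 + η * ‖z t‖) :
    ‖z b‖ ^ 2 ≤ Real.exp (-δ * (b - a)) * ‖z a‖ ^ 2 + (η / δ) ^ 2 := by
  have hnorm : AbsolutelyContinuousOnInterval (fun t => ‖z t‖) a b :=
    absolutelyContinuousOnInterval_lipschitzWith_comp (g := fun x : E => ‖x‖) lipschitzWith_one_norm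
      hz.absolutelyContinuousOnInterval
  have hsq : AbsolutelyContinuousOnInterval (fun t => ‖z t‖ ^ 2) a b := by
    simpa only [sq] using hnorm.fun_mul hnorm
  have hdecay := sub_le_exp_mul_of_ae_deriv_le (c := (η / δ) ^ 2) (δ := δ) hz.le hsq <| by
    filter_upwards [h, hz.ae_hasDerivAt] with t ht hd hmem
    rw [(hd hmem).norm_sq.deriv]
    have hyoung : 2 * (η * ‖z t‖) ≤ δ * ‖z t‖ ^ 2 + δ * (η / δ) ^ 2 := by
      have : 0 ≤ δ * (‖z t‖ - η / δ) ^ 2 := by positivity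
      have hη : δ * (η / δ) = η := mul_div_cancel₀ η hδ.ne'
      linear_combination this - 2 * ‖z t‖ * hη
    linarith [ht hmem]
  have : 0 ≤ Real.exp (-δ * (b - a)) * (η / δ) ^ 2 := by positivity
  linarith

section Reaction

/-- `r` is the selection of `p.1 H₀(v) + p.2 v` which vanishes wherever `v` does. Strong solutions
that are nonnegative can only use this selection. -/
def IsReaction (p : ℝ × ℝ) (v r : Hsp) : Prop :=
  ∀ᵐ x ∂μ01, (v x = 0 → r x = 0) ∧ (0 < v x → r x = p.1 + p.2 * v x)

lemma IsReaction.nonneg {p : ℝ × ℝ} {v r : Hsp} (h : IsReaction p v r) (hp : 0 ≤ p)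
    (hv : 0 ≤ v) : 0 ≤ r := by
  refine (Lp.coeFn_nonneg r).1 ?_
  filter_upwards [h, (Lp.coeFn_nonneg v).2 hv] with x hx hvx
  rcases hvx.eq_or_lt with hzero | hpos
  · exact (hx.1 hzero.symm).ge
  · rw [Pi.zero_apply, hx.2 hpos]
    exact add_nonneg hp.1 (mul_nonneg hp.2 hvx)

lemma IsReaction.eq_of_ae_pos {p : ℝ × ℝ} {v r : Hsp} (h : IsReaction p v r)
    (hv : ∀ᵐ x ∂μ01, 0 < v x) : r = Lp.const 2 μ01 p.1 + p.2 • v := by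
  refine Lp.ext ?_
  filter_upwards [h, hv, Lp.coeFn_add (Lp.const 2 μ01 p.1) (p.2 • v), Lp.coeFn_smul p.2 v,
    Lp.coeFn_const 2 μ01 p.1] with x hx hpos hadd hsmul hconst
  rw [hx.2 hpos, hadd, Pi.add_apply, hsmul, hconst]
  rfl

lemma norm_const_μ01 (c : ℝ) : ‖Lp.const 2 μ01 c‖ = |c| := by
  simp [Lp.norm_const]

end Reaction

namespace IsNonnegCompleteTraj

variable {σ : C(ℝ, ℝ × ℝ)} {γ : ℝ → Hsp} {a b : ℝ}

lemma nonneg (h : IsNonnegCompleteTraj σ γ) (t : ℝ) : 0 ≤ γ t := (Lp.coeFn_nonneg _).1 (h.2 t)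

protected lemma continuous (h : IsNonnegCompleteTraj σ γ) : Continuous γ := by
  refine continuous_iff_continuousAt.2 fun t => ?_
  obtain ⟨r, u', uxx, hsol⟩ := h.1 (t - 1)
  exact hsol.cont.continuousAt (Ici_mem_nhds (sub_one_lt t))

lemma ae_exists_inDomainA (h : IsNonnegCompleteTraj σ γ) (a : ℝ) :
    ∀ᵐ t, a < t → ∃ w, InDomainA (γ t) w := by
  obtain ⟨r, u', uxx, hsol⟩ := h.1 a
  filter_upwards [(ae_restrict_iff' measurableSet_Ioi).1 hsol.dom] with t ht hat using ⟨_, ht hat⟩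

lemma exists_isPrimitiveOn (h : IsNonnegCompleteTraj σ γ) (hab : a < b) :
    ∃ u', IsPrimitiveOn γ u' a b ∧ ∀ᵐ t, t ∈ Ioo a b →
      ∃ w r, InDomainA (γ t) w ∧ IsReaction (σ t) (γ t) r ∧ u' t = r + w := by
  obtain ⟨r, u', uxx, hsol⟩ := h.1 (a - 1)
  obtain ⟨hint, hprim⟩ := hsol.fund a b (sub_one_lt a) hab
  have hγ : IsPrimitiveOn γ u' a b := ⟨hab.le, hint, hprim⟩
  refine ⟨u', hγ, ?_⟩
  filter_upwards [(ae_restrict_iff' measurableSet_Ioi).1 hsol.sel,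
    (ae_restrict_iff' measurableSet_Ioi).1 hsol.dom, (ae_restrict_iff' measurableSet_Ioi).1 hsol.eq,
    hγ.ae_hasDerivAt] with t hsel hdom heq hd hmem
  have hτ : t ∈ Ioi (a - 1) := (sub_one_lt a).trans hmem.1
  refine ⟨uxx t, r t, hdom hτ, ?_, heq hτ⟩
  filter_upwards [hsel hτ, ae_deriv_eq_zero_of_eq_zero_of_nonneg (hd hmem) h.nonneg,
    (hdom hτ).ae_eq_zero_of_eq_zero (h.nonneg t), Lp.coeFn_add (r t) (uxx t)]
    with x ⟨s, hs, hr⟩ hu' hw hadd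
  refine ⟨fun hzero => ?_, fun hpos => ?_⟩
  · have hsum := hu' hzero
    rw [heq hτ, hadd, Pi.add_apply, hw hzero, add_zero] at hsum
    exact hsum
  · rw [heaviside, if_neg hpos.not_gt, if_neg hpos.ne', mem_singleton_iff] at hs
    rw [hr, hs, mul_one]

lemma exists_isSupersolutionOn (h : IsNonnegCompleteTraj σ γ) (hσ : ∀ t, 0 ≤ σ t) (hab : a < b) :
    ∃ u', IsSupersolutionOn γ u' a b := by
  obtain ⟨u', hγ, hu'⟩ := h.exists_isPrimitiveOn hab
  refine ⟨u', hγ, ?_⟩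
  filter_upwards [hu'] with t ht hmem
  obtain ⟨w, r, hw, hr, heq⟩ := ht hmem
  exact ⟨w, hw, heq ▸ le_add_of_nonneg_left (hr.nonneg (hσ t) (h.nonneg t))⟩

end IsNonnegCompleteTraj

/-- At almost every time after `a`, the curve `γ` takes almost everywhere positive values. -/
def IsPositiveAfter (a : ℝ) (γ : ℝ → Hsp) : Prop := ∀ᵐ t, a < t → ∀ᵐ x ∂μ01, 0 < γ t x

namespace IsNonnegCompleteTraj

variable {σ τ : C(ℝ, ℝ × ℝ)} {γ ζ : ℝ → Hsp} {a b : ℝ}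

lemma isPositiveAfter_of_ne_zero (h : IsNonnegCompleteTraj σ γ) (hσ : ∀ t, 0 ≤ σ t)
    (ha : γ a ≠ 0) : IsPositiveAfter a γ := by
  have hdom := h.ae_exists_inDomainA a
  filter_upwards [hdom] with t ht hat
  obtain ⟨s, ⟨hs, hs0⟩, hsdom⟩ : ∃ s ∈ Ioo a t ∩ {s | γ s ≠ 0}, a < s → ∃ w, InDomainA (γ s) w := by
    refine (Measure.dense_of_ae hdom).inter_open_nonempty _
      (isOpen_Ioo.inter (isOpen_ne_fun h.continuous continuous_const)) ?_
    have hne : ∀ᶠ s in nhdsWithin a (Ioi a), γ s ≠ 0 :=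
      (h.continuous.continuousAt.eventually_ne ha).filter_mono nhdsWithin_le_nhds
    exact Filter.nonempty_of_mem (Filter.inter_mem (Ioo_mem_nhdsGT hat) hne)
  obtain ⟨w, hw⟩ := hsdom hs.1
  obtain ⟨w', hw'⟩ := ht hat
  obtain ⟨u', hu'⟩ := h.exists_isSupersolutionOn hσ hs.2
  exact hu'.ae_pos hs.2 hw hw' (h.nonneg s) hs0

lemma exists_isPrimitiveOn_of_isPositiveAfter (h : IsNonnegCompleteTraj σ γ)
    (hpos : IsPositiveAfter a γ) (hab : a < b) :
    ∃ u', IsPrimitiveOn γ u' a b ∧ ∀ᵐ t, t ∈ Ioo a b →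
      ∃ w, InDomainA (γ t) w ∧ u' t = w + (Lp.const 2 μ01 (σ t).1 + (σ t).2 • γ t) := by
  obtain ⟨u', hγ, hu'⟩ := h.exists_isPrimitiveOn hab
  refine ⟨u', hγ, ?_⟩
  filter_upwards [hu', hpos] with t ht hpost hmem
  obtain ⟨w, r, hw, hr, heq⟩ := ht hmem
  exact ⟨w, hw, by rw [heq, hr.eq_of_ae_pos (hpost hmem.1), add_comm]⟩

lemma norm_sub_sq_le (hγ : IsNonnegCompleteTraj σ γ) (hζ : IsNonnegCompleteTraj τ ζ)
    (hγpos : IsPositiveAfter a γ) (hζpos : IsPositiveAfter a ζ) (hab : a < b) {ω₁ η M : ℝ}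
    (hω₁ : ω₁ < Real.pi ^ 2) (hσ : ∀ t, (σ t).2 ≤ ω₁) (hη : ∀ t ∈ Ioo a b, dist (σ t) (τ t) ≤ η)
    (hM : ∀ t, ‖ζ t‖ ≤ M) :
    ‖γ b - ζ b‖ ^ 2 ≤ Real.exp (-(Real.pi ^ 2 - ω₁) * (b - a)) * ‖γ a - ζ a‖ ^ 2 +
      (η * (1 + M) / (Real.pi ^ 2 - ω₁)) ^ 2 := by
  obtain ⟨u', hu, hu'⟩ := hγ.exists_isPrimitiveOn_of_isPositiveAfter hγpos hab
  obtain ⟨v', hv, hv'⟩ := hζ.exists_isPrimitiveOn_of_isPositiveAfter hζpos hab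
  refine (hu.sub hv).norm_sq_le (sub_pos.2 hω₁) ?_
  filter_upwards [hu', hv'] with t hut hvt hmem
  obtain ⟨w, hw, hu't⟩ := hut hmem
  obtain ⟨w', hw', hv't⟩ := hvt hmem
  have hfst : |(σ t).1 - (τ t).1| ≤ η := (le_max_left _ _).trans (hη t hmem)
  have hsnd : |(σ t).2 - (τ t).2| ≤ η := (le_max_right _ _).trans (hη t hmem)
  set f := Lp.const 2 μ01 ((σ t).1 - (τ t).1) + ((σ t).2 - (τ t).2) • ζ t
  have hf : ‖f‖ ≤ η * (1 + M) := by
    refine (norm_add_le _ _).trans ?_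
    rw [norm_const_μ01, norm_smul, Real.norm_eq_abs, mul_add, mul_one]
    exact add_le_add hfst (mul_le_mul hsnd (hM t) (norm_nonneg _) ((abs_nonneg _).trans hsnd))
  have hsplit : u' t - v' t = (w - w') + (σ t).2 • (γ t - ζ t) + f := by
    rw [hu't, hv't]
    simp only [f, map_sub]
    module
  rw [hsplit, inner_add_right, inner_add_right, inner_smul_right, real_inner_self_eq_norm_sq]
  have hdiff := (hw.sub hw').inner_le_neg_pi_sq_mul
  have hpot := mul_le_mul_of_nonneg_right (hσ t) (sq_nonneg ‖γ t - ζ t‖)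
  have hpert : inner ℝ (γ t - ζ t) f ≤ η * (1 + M) * ‖γ t - ζ t‖ :=
    (real_inner_le_norm _ _).trans (by rw [mul_comm]; gcongr)
  linarith

lemma norm_sq_le (h : IsNonnegCompleteTraj σ γ) (hpos : IsPositiveAfter a γ) (hab : a < b)
    {b₁ ω₁ : ℝ} (hω₁ : ω₁ < Real.pi ^ 2) (hσ : ∀ t, |(σ t).1| ≤ b₁ ∧ (σ t).2 ≤ ω₁) :
    ‖γ b‖ ^ 2 ≤ Real.exp (-(Real.pi ^ 2 - ω₁) * (b - a)) * ‖γ a‖ ^ 2 +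
      (b₁ / (Real.pi ^ 2 - ω₁)) ^ 2 := by
  obtain ⟨u', hu, hu'⟩ := h.exists_isPrimitiveOn_of_isPositiveAfter hpos hab
  refine hu.norm_sq_le (sub_pos.2 hω₁) ?_
  filter_upwards [hu'] with t ht hmem
  obtain ⟨w, hw, hu't⟩ := ht hmem
  rw [hu't, inner_add_right, inner_add_right, inner_smul_right, real_inner_self_eq_norm_sq]
  have hdiff := hw.inner_le_neg_pi_sq_mul
  have hpot := mul_le_mul_of_nonneg_right (hσ t).2 (sq_nonneg ‖γ t‖)
  have hconst : inner ℝ (γ t) (Lp.const 2 μ01 (σ t).1) ≤ b₁ * ‖γ t‖ :=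
    (real_inner_le_norm _ _).trans (by
      rw [norm_const_μ01, mul_comm]
      exact mul_le_mul_of_nonneg_right (hσ t).1 (norm_nonneg _))
  linarith

end IsNonnegCompleteTraj

lemma tendsto_exp_neg_mul_sub_atBot {δ : ℝ} (hδ : 0 < δ) (b : ℝ) :
    Filter.Tendsto (fun a => Real.exp (-δ * (b - a))) Filter.atBot (nhds 0) :=
  Real.tendsto_exp_atBot.comp <| (Filter.tendsto_atTop_add_const_left _ b
    Filter.tendsto_neg_atBot_atTop).const_mul_atTop_of_neg (neg_lt_zero.2 hδ)

lemma tendsto_exp_neg_mul_sub_atTop {δ : ℝ} (hδ : 0 < δ) (a : ℝ) :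
    Filter.Tendsto (fun b => Real.exp (-δ * (b - a))) Filter.atTop (nhds 0) :=
  Real.tendsto_exp_atBot.comp <| (Filter.tendsto_atTop_add_const_right _ (-a)
    Filter.tendsto_id).const_mul_atTop_of_neg (neg_lt_zero.2 hδ)

lemma le_of_frequently_le_exp_mul_add {δ b y C c : ℝ} (hδ : 0 < δ)
    (h : ∃ᶠ a in Filter.atBot, y ≤ Real.exp (-δ * (b - a)) * C + c) : y ≤ c := by
  have hlim := ((tendsto_exp_neg_mul_sub_atBot hδ b).mul_const C).add_const c
  rw [zero_mul, zero_add] at hlim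
  exact ge_of_tendsto_of_frequently hlim h

lemma BddTraj.exists_norm_sub_sq_le {γ ζ : ℝ → Hsp} (hγ : BddTraj γ) (hζ : BddTraj ζ) :
    ∃ C, ∀ t, ‖γ t - ζ t‖ ^ 2 ≤ C := by
  obtain ⟨M, hM⟩ := hγ
  obtain ⟨N, hN⟩ := hζ
  exact ⟨(M + N) ^ 2, fun t => pow_le_pow_left₀ (norm_nonneg _)
    ((norm_sub_le _ _).trans (add_le_add (hM t) (hN t))) 2⟩

lemma toH_sineMode_nonneg : 0 ≤ toH sineMode := by
  refine (Lp.coeFn_nonneg _).1 ?_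
  filter_upwards [BoundedContinuousFunction.coeFn_toLp 2 μ01 ℝ sineMode, ae_μ01_mem_Ioo]
    with x hx hmem
  exact hx ▸ (sineMode_pos hmem).le

lemma inner_sineMode_const (c : ℝ) :
    inner ℝ (toH sineMode) (Lp.const 2 μ01 c) = 2 * c / Real.pi := by
  rw [L2_real_inner_eq_integral_of_ae_eq
    (BoundedContinuousFunction.coeFn_toLp 2 μ01 ℝ sineMode).symm (Lp.coeFn_const 2 μ01 c).symm,
    integral_μ01]
  simp only [sineMode_apply, Function.const_apply, intervalIntegral.integral_mul_const,
    intervalIntegral.integral_comp_mul_left Real.sin Real.pi_ne_zero, integral_sin, mul_zero,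
    mul_one, Real.cos_zero, Real.cos_pi, smul_eq_mul]
  ring

lemma norm_toH_sineMode_le_one : ‖toH sineMode‖ ≤ 1 := by
  refine (BoundedContinuousFunction.Lp_norm_le sineMode).trans ?_
  have hsin : ‖sineMode‖ ≤ 1 :=
    BoundedContinuousFunction.norm_le zero_le_one |>.2 fun x => Real.abs_sin_le_one (Real.pi * x)
  simpa [measureUnivNNReal] using hsin

namespace IsNonnegCompleteTraj

variable {σ : C(ℝ, ℝ × ℝ)} {γ : ℝ → Hsp} {b₀ b₁ ω₁ : ℝ}

lemma norm_le_div (h : IsNonnegCompleteTraj σ γ) (hbdd : BddTraj γ)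
    (hpos : ∀ a, IsPositiveAfter a γ) (hω₁ : ω₁ < Real.pi ^ 2)
    (hσ : ∀ t, |(σ t).1| ≤ b₁ ∧ (σ t).2 ≤ ω₁) (t : ℝ) : ‖γ t‖ ≤ b₁ / (Real.pi ^ 2 - ω₁) := by
  obtain ⟨M, hM⟩ := hbdd
  have hδ : 0 < Real.pi ^ 2 - ω₁ := sub_pos.2 hω₁
  have hb₁ : 0 ≤ b₁ := (abs_nonneg _).trans (hσ t).1
  refine (sq_le_sq₀ (norm_nonneg _) (by positivity)).1 <|
    le_of_frequently_le_exp_mul_add (C := M ^ 2) hδ (b := t) (Filter.Eventually.frequently ?_)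
  filter_upwards [Filter.eventually_lt_atBot t] with a hat
  refine (h.norm_sq_le (hpos a) hat hω₁ hσ).trans ?_
  gcongr
  exact hM a

lemma le_inner_sineMode (h : IsNonnegCompleteTraj σ γ) (hpos : ∀ a, IsPositiveAfter a γ)
    (hσ : ∀ t, (b₀, 0) ≤ σ t) (t : ℝ) :
    2 * b₀ / Real.pi ^ 3 ≤ inner ℝ (toH sineMode) (γ t) := by
  set c := 2 * b₀ / Real.pi ^ 3
  have hsine (s : ℝ) : 0 ≤ inner ℝ (toH sineMode) (γ s) :=
    L2_inner_nonneg toH_sineMode_nonneg (h.nonneg s)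
  set L := -innerSL ℝ (toH sineMode)
  refine neg_le_neg_iff.1 <| le_of_frequently_le_exp_mul_add (δ := Real.pi ^ 2) (b := t)
    (C := c) (by positivity) (Filter.Eventually.frequently ?_)
  filter_upwards [Filter.eventually_lt_atBot t] with a hat
  obtain ⟨u', hu, hu'⟩ := h.exists_isPrimitiveOn_of_isPositiveAfter (hpos a) hat
  have hdecay : L (γ t) - -c ≤ Real.exp (-Real.pi ^ 2 * (t - a)) * (L (γ a) - -c) := by
    refine sub_le_exp_mul_of_ae_deriv_le hat.le (absolutelyContinuousOnInterval_lipschitzWith_comp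
      (g := L) L.lipschitz hu.absolutelyContinuousOnInterval) ?_
    filter_upwards [hu', hu.ae_hasDerivAt] with s hs hd hmem
    obtain ⟨w, hw, hu's⟩ := hs hmem
    have hderiv : HasDerivAt (fun s => L (γ s)) (L (u' s)) s :=
      L.hasFDerivAt.comp_hasDerivAt s (hd hmem)
    rw [hderiv.deriv, hu's]
    simp only [L, neg_apply, innerSL_apply_apply, inner_add_right, inner_smul_right,
      inner_sineMode_const, hw.inner_sineMode]
    have hreact : 2 * b₀ / Real.pi ≤ 2 * (σ s).1 / Real.pi := by gcongr; exact (hσ s).1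
    have hpot : 0 ≤ (σ s).2 * inner ℝ (toH sineMode) (γ s) := mul_nonneg (hσ s).2 (hsine s)
    have hc : Real.pi ^ 2 * c = 2 * b₀ / Real.pi := by simp only [c]; field_simp
    linarith
  have hLa : L (γ a) ≤ 0 := neg_nonpos.2 (hsine a)
  have hLt : -inner ℝ (toH sineMode) (γ t) = L (γ t) := rfl
  have := mul_nonpos_of_nonneg_of_nonpos (Real.exp_pos (-Real.pi ^ 2 * (t - a))).le hLa
  linarith

lemma le_norm (h : IsNonnegCompleteTraj σ γ) (hpos : ∀ a, IsPositiveAfter a γ)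
    (hσ : ∀ t, (b₀, 0) ≤ σ t) (t : ℝ) : 2 * b₀ / Real.pi ^ 3 ≤ ‖γ t‖ :=
  (h.le_inner_sineMode hpos hσ t).trans <| (real_inner_le_norm _ _).trans <|
    mul_le_of_le_one_left (norm_nonneg _) norm_toH_sineMode_le_one

end IsNonnegCompleteTraj

/-! ### Positive equilibria -/

/-- A nonautonomous equilibrium: a bounded complete trajectory which is positive at every time,
positivity being required almost everywhere only. -/
structure IsPositiveEquilibrium (σ : C(ℝ, ℝ × ℝ)) (ζ : ℝ → Hsp) : Prop where
  isNonnegCompleteTraj : IsNonnegCompleteTraj σ ζ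
  bddTraj : BddTraj ζ
  ae_pos : ∀ t, ∀ᵐ x ∂μ01, 0 < ζ t x

lemma IsPositive.ae_pos {v : Hsp} (h : IsPositive v) : ∀ᵐ x ∂μ01, 0 < v x := by
  obtain ⟨f, -, hfv, hf⟩ := h
  filter_upwards [hfv, ae_μ01_mem_Ioo] with x hx hmem using hx ▸ hf x hmem

namespace IsPositiveEquilibrium

variable {σ : C(ℝ, ℝ × ℝ)} {γ ζ : ℝ → Hsp} {a b₀ b₁ ω₁ : ℝ}

lemma isPositiveAfter (h : IsPositiveEquilibrium σ ζ) (a : ℝ) : IsPositiveAfter a ζ :=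
  .of_forall fun t _ => h.ae_pos t

lemma eq_of_frequently_isPositiveAfter (hζ : IsPositiveEquilibrium σ ζ)
    (hγ : IsNonnegCompleteTraj σ γ) (hbdd : BddTraj γ)
    (hpos : ∃ᶠ a in Filter.atBot, IsPositiveAfter a γ) (hω₁ : ω₁ < Real.pi ^ 2)
    (hσ : ∀ t, (σ t).2 ≤ ω₁) (t : ℝ) : γ t = ζ t := by
  obtain ⟨C, hC⟩ := hbdd.exists_norm_sub_sq_le hζ.bddTraj
  obtain ⟨M, hM⟩ := hζ.bddTraj
  have hle : ‖γ t - ζ t‖ ^ 2 ≤ 0 := by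
    refine le_of_frequently_le_exp_mul_add (C := C) (sub_pos.2 hω₁) (b := t) <|
      (hpos.and_eventually (Filter.eventually_lt_atBot t)).mono fun a ⟨ha, hat⟩ => ?_
    have hdist := hγ.norm_sub_sq_le hζ.isNonnegCompleteTraj ha (hζ.isPositiveAfter a) hat hω₁ hσ
      (η := 0) (fun s _ => (dist_self _).le) hM
    rw [zero_mul, zero_div, zero_pow two_ne_zero] at hdist
    exact hdist.trans (by gcongr; exact hC a)
  rwa [sq_nonpos_iff, norm_eq_zero, sub_eq_zero] at hle

lemma tendsto_norm_sub (hζ : IsPositiveEquilibrium σ ζ) (hγ : IsNonnegCompleteTraj σ γ)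
    (hpos : IsPositiveAfter a γ) (hω₁ : ω₁ < Real.pi ^ 2) (hσ : ∀ t, (σ t).2 ≤ ω₁) :
    Filter.Tendsto (fun t => ‖γ t - ζ t‖) Filter.atTop (nhds 0) := by
  obtain ⟨M, hM⟩ := hζ.bddTraj
  have hsq : Filter.Tendsto (fun t => ‖γ t - ζ t‖ ^ 2) Filter.atTop (nhds 0) := by
    refine squeeze_zero' (.of_forall fun t => sq_nonneg _) ?_ <| zero_mul (‖γ a - ζ a‖ ^ 2) ▸
      (tendsto_exp_neg_mul_sub_atTop (sub_pos.2 hω₁) a).mul_const (‖γ a - ζ a‖ ^ 2)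
    filter_upwards [Filter.eventually_gt_atTop a] with t hat
    simpa using hγ.norm_sub_sq_le hζ.isNonnegCompleteTraj hpos (hζ.isPositiveAfter a) hat hω₁ hσ
      (η := 0) (fun s _ => (dist_self _).le) hM
  simpa using hsq.sqrt

lemma trichotomy (hζ : IsPositiveEquilibrium σ ζ) (hγ : IsNonnegCompleteTraj σ γ)
    (hbdd : BddTraj γ) (hω₁ : ω₁ < Real.pi ^ 2) (hσ : ∀ t, 0 ≤ σ t ∧ (σ t).2 ≤ ω₁) :
    (∀ t, γ t = ζ t) ∨ (∀ t, γ t = 0) ∨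
      (Filter.Tendsto (fun t => ‖γ t - ζ t‖) Filter.atTop (nhds 0) ∧
        ∀ᶠ t in Filter.atBot, γ t = 0) := by
  have hpos (a : ℝ) (ha : γ a ≠ 0) : IsPositiveAfter a γ :=
    hγ.isPositiveAfter_of_ne_zero (fun t => (hσ t).1) ha
  by_cases hfreq : ∃ᶠ a in Filter.atBot, γ a ≠ 0
  · exact .inl <| hζ.eq_of_frequently_isPositiveAfter hγ hbdd (hfreq.mono hpos) hω₁
      fun t => (hσ t).2
  by_cases hzero : ∀ t, γ t = 0
  · exact .inr (.inl hzero)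
  obtain ⟨a, ha⟩ := not_forall.1 hzero
  exact .inr <| .inr ⟨hζ.tendsto_norm_sub hγ (hpos a ha) hω₁ fun t => (hσ t).2,
    by simpa only [Filter.not_frequently, not_not] using hfreq⟩

lemma norm_le_div (hζ : IsPositiveEquilibrium σ ζ) (hω₁ : ω₁ < Real.pi ^ 2)
    (hσ : ∀ t, |(σ t).1| ≤ b₁ ∧ (σ t).2 ≤ ω₁) (t : ℝ) : ‖ζ t‖ ≤ b₁ / (Real.pi ^ 2 - ω₁) :=
  hζ.isNonnegCompleteTraj.norm_le_div hζ.bddTraj hζ.isPositiveAfter hω₁ hσ t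

lemma le_norm (hζ : IsPositiveEquilibrium σ ζ) (hσ : ∀ t, (b₀, 0) ≤ σ t) (t : ℝ) :
    2 * b₀ / Real.pi ^ 3 ≤ ‖ζ t‖ :=
  hζ.isNonnegCompleteTraj.le_norm hζ.isPositiveAfter hσ t

end IsPositiveEquilibrium

section Translation

variable {σ : C(ℝ, ℝ × ℝ)} {γ : ℝ → Hsp}

lemma IsNonnegCompleteTraj.translate (h : IsNonnegCompleteTraj σ γ) (s : ℝ) :
    IsNonnegCompleteTraj (translateCM s σ) (fun t => γ (t + s)) := by
  refine ⟨fun τ => ?_, fun t => h.2 _⟩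
  obtain ⟨r, u', uxx, hsol⟩ := h.1 (τ + s)
  have hpres := measurePreserving_add_right (volume : Measure ℝ) s
  have hIoi : MeasurePreserving (fun t => t + s) (volume.restrict (Ioi τ))
      (volume.restrict (Ioi (τ + s))) := by
    simpa using hpres.restrict_preimage (measurableSet_Ioi (a := τ + s))
  have hIoo (T : ℝ) : MeasurePreserving (fun t => t + s) (volume.restrict (Ioo τ T))
      (volume.restrict (Ioo (τ + s) (T + s))) := by
    simpa using hpres.restrict_preimage (measurableSet_Ioo (a := τ + s) (b := T + s))
  refine ⟨fun t => r (t + s), fun t => u' (t + s), fun t => uxx (t + s),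
    hsol.cont.comp (by fun_prop) fun t ht => add_le_add_left ht s,
    fun T hT => (hsol.rmem (T + s) (add_lt_add_left hT s)).comp_measurePreserving (hIoo T),
    hIoi.quasiMeasurePreserving.ae hsol.sel, hIoi.quasiMeasurePreserving.ae hsol.dom,
    hIoi.quasiMeasurePreserving.ae hsol.eq, fun T₁ T₂ hT₁ hT₂ => ?_⟩
  obtain ⟨hint, hprim⟩ := hsol.fund (T₁ + s) (T₂ + s) (add_lt_add_left hT₁ s)
    (add_lt_add_left hT₂ s)
  refine ⟨by simpa using hint.comp_add_right s, fun t ht => ?_⟩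
  rw [intervalIntegral.integral_comp_add_right u' s]
  exact hprim (t + s) ⟨add_le_add_left ht.1 s, add_le_add_left ht.2 s⟩

lemma isNonnegCompleteTraj_zero (σ : C(ℝ, ℝ × ℝ)) : IsNonnegCompleteTraj σ (fun _ => 0) := by
  refine ⟨fun τ => ⟨fun _ => 0, fun _ => 0, fun _ => 0, continuousOn_const, fun _ _ => MemLp.zero,
    .of_forall fun t => .of_forall fun x => ⟨0, by simp [heaviside], by simp⟩,
    .of_forall fun _ => inDomainA_zero, .of_forall fun _ => (add_zero 0).symm,
    fun _ _ _ _ => ⟨intervalIntegrable_const, fun t _ => by simp⟩⟩, fun _ => ?_⟩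
  exact (Lp.coeFn_nonneg _).2 le_rfl

lemma IsPositiveEquilibrium.translate (h : IsPositiveEquilibrium σ γ) (s : ℝ) :
    IsPositiveEquilibrium (translateCM s σ) (fun t => γ (t + s)) :=
  ⟨h.isNonnegCompleteTraj.translate s, h.bddTraj.imp fun _ hM t => hM (t + s),
    fun t => h.ae_pos (t + s)⟩

end Translation

lemma isCompact_closure_of_equicontinuous {X α : Type*} [TopologicalSpace X]
    [CompactlyCoherentSpace X] [UniformSpace α] [T2Space α] {S : Set C(X, α)} {K : Set α}
    (hK : IsCompact K) (hSK : ∀ f ∈ S, ∀ x, f x ∈ K)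
    (hS : Equicontinuous (fun (f : S) x => (f : C(X, α)) x)) : IsCompact (closure S) := by
  refine ArzelaAscoli.isCompact_closure_of_isClosedEmbedding (𝔖 := {C | IsCompact C})
    (F := fun f : C(X, α) => ⇑f) (fun _ hC => hC)
    ⟨ContinuousMap.isUniformEmbedding_toUniformOnFunIsCompact.isEmbedding, ?_⟩
    (fun C _ => hS.equicontinuousOn C) fun _ _ x _ => ⟨K, hK, fun f hf => hSK f hf x⟩
  change IsClosed (range ContinuousMap.toUniformOnFunIsCompact)
  rw [ContinuousMap.range_toUniformOnFunIsCompact]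
  exact UniformOnFun.isClosed_setOfPred_continuous CompactlyCoherentSpace.isCoherentWith

section Hull

variable {σ σ₀ : C(ℝ, ℝ × ℝ)} {K : Set (ℝ × ℝ)}

lemma translateCM_mem_hullSet (h : σ ∈ hullSet σ₀) (t : ℝ) : translateCM t σ ∈ hullSet σ₀ := by
  refine MapsTo.closure ?_ (ContinuousMap.continuous_precomp _) h
  rintro _ ⟨s, rfl⟩
  exact ⟨t + s, ContinuousMap.ext fun r => congrArg σ₀ (add_assoc r t s)⟩

lemma apply_mem_of_mem_hullSet (hK : IsClosed K) (hσ₀ : ∀ t, σ₀ t ∈ K) (h : σ ∈ hullSet σ₀)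
    (t : ℝ) : σ t ∈ K := by
  refine closure_minimal (t := (fun σ : C(ℝ, ℝ × ℝ) => σ t) ⁻¹' K) ?_
    (hK.preimage (continuous_eval_const t)) h
  rintro _ ⟨s, rfl⟩
  exact hσ₀ (t + s)

lemma isCompact_hullSet (hK : IsCompact K) (hσ₀ : ∀ t, σ₀ t ∈ K) (hu : UniformContinuous σ₀) :
    IsCompact (hullSet σ₀) := by
  refine isCompact_closure_of_equicontinuous hK ?_ (UniformEquicontinuous.equicontinuous ?_)
  · rintro _ ⟨s, rfl⟩ t
    exact hσ₀ (t + s)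
  · refine Metric.uniformEquicontinuous_iff.2 fun ε hε => ?_
    obtain ⟨δ, hδ, hσδ⟩ := Metric.uniformContinuous_iff.1 hu ε hε
    refine ⟨δ, hδ, fun x y hxy => ?_⟩
    rintro ⟨_, s, rfl⟩
    exact hσδ ((dist_add_right x y s).trans_lt hxy)

end Hull

section EquilibriumFamily

variable {S : Set C(ℝ, ℝ × ℝ)} {ξ : C(ℝ, ℝ × ℝ) → ℝ → Hsp} {σ τ : C(ℝ, ℝ × ℝ)} {b₁ ω₁ : ℝ}

lemma IsPositiveEquilibrium.eq_translate {ζ ζ' : ℝ → Hsp} {s : ℝ} (hζ : IsPositiveEquilibrium σ ζ)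
    (hζ' : IsPositiveEquilibrium (translateCM s σ) ζ') (hω₁ : ω₁ < Real.pi ^ 2)
    (hσ : ∀ t, (σ t).2 ≤ ω₁) (t : ℝ) : ζ (t + s) = ζ' t :=
  have hs := hζ.translate s
  hζ'.eq_of_frequently_isPositiveAfter hs.isNonnegCompleteTraj hs.bddTraj
    (.of_forall hs.isPositiveAfter) hω₁ (fun t => hσ (t + s)) t

lemma IsPositiveEquilibrium.norm_sub_sq_le {ζ ζ' : ℝ → Hsp} {a b η : ℝ}
    (hζ : IsPositiveEquilibrium σ ζ) (hζ' : IsPositiveEquilibrium τ ζ') (hω₁ : ω₁ < Real.pi ^ 2)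
    (hσ : ∀ t, |(σ t).1| ≤ b₁ ∧ (σ t).2 ≤ ω₁) (hτ : ∀ t, |(τ t).1| ≤ b₁ ∧ (τ t).2 ≤ ω₁)
    (hab : a < b) (hη : ∀ t ∈ Ioo a b, dist (σ t) (τ t) ≤ η) :
    ‖ζ b - ζ' b‖ ^ 2 ≤
      Real.exp (-(Real.pi ^ 2 - ω₁) * (b - a)) * (2 * (b₁ / (Real.pi ^ 2 - ω₁))) ^ 2 +
        (η * (1 + b₁ / (Real.pi ^ 2 - ω₁)) / (Real.pi ^ 2 - ω₁)) ^ 2 := by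
  refine (hζ.isNonnegCompleteTraj.norm_sub_sq_le hζ'.isNonnegCompleteTraj (hζ.isPositiveAfter a)
    (hζ'.isPositiveAfter a) hab hω₁ (fun t => (hσ t).2) hη (hζ'.norm_le_div hω₁ hτ)).trans ?_
  gcongr
  rw [two_mul]
  exact (norm_sub_le _ _).trans (add_le_add (hζ.norm_le_div hω₁ hσ a) (hζ'.norm_le_div hω₁ hτ a))

lemma continuousOn_equilibrium (hξ : ∀ σ ∈ S, IsPositiveEquilibrium σ (ξ σ))
    (hω₁ : ω₁ < Real.pi ^ 2) (hS : ∀ σ ∈ S, ∀ t, |(σ t).1| ≤ b₁ ∧ (σ t).2 ≤ ω₁) :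
    ContinuousOn (fun σ => ξ σ 0) S := by
  intro σ hσ
  set δ := Real.pi ^ 2 - ω₁
  set M := b₁ / δ
  have hδ : 0 < δ := sub_pos.2 hω₁
  refine Metric.tendsto_nhds.2 fun ε hε => ?_
  have hε2 : 0 < ε ^ 2 / 2 := by positivity
  obtain ⟨a, haε, ha⟩ : ∃ a, Real.exp (-δ * (0 - a)) * (2 * M) ^ 2 < ε ^ 2 / 2 ∧ a < 0 := by
    have hlim := (tendsto_exp_neg_mul_sub_atBot hδ 0).mul_const ((2 * M) ^ 2)
    exact ((hlim.eventually_lt_const (by simpa using hε2)).and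
      (Filter.eventually_lt_atBot 0)).exists
  obtain ⟨η, hηε, hη⟩ : ∃ η, (η * (1 + M) / δ) ^ 2 < ε ^ 2 / 2 ∧ 0 < η := by
    have hcont : Continuous fun η : ℝ => (η * (1 + M) / δ) ^ 2 := by fun_prop
    have hlim := (hcont.tendsto 0).mono_left (nhdsWithin_le_nhds (s := Ioi 0))
    exact ((hlim.eventually_lt_const (by simpa using hε2)).and self_mem_nhdsWithin).exists
  have hunif : ∀ᶠ τ in nhds σ, ∀ t ∈ Icc a 0, dist (σ t) (τ t) < η :=
    Metric.tendstoUniformlyOn_iff.1 (ContinuousMap.tendsto_iff_forall_isCompact_tendstoUniformlyOn.1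
      Filter.tendsto_id _ isCompact_Icc) η hη
  filter_upwards [nhdsWithin_le_nhds hunif, self_mem_nhdsWithin] with τ hτσ hτ
  have hle := (hξ σ hσ).norm_sub_sq_le (hξ τ hτ) hω₁ (hS σ hσ) (hS τ hτ) ha fun t ht =>
    (hτσ t (Ioo_subset_Icc_self ht)).le
  rw [dist_comm, dist_eq_norm]
  exact lt_of_pow_lt_pow_left₀ 2 hε.le (by linarith)

end EquilibriumFamily

namespace IsPositiveEquilibrium

variable {σ : C(ℝ, ℝ × ℝ)} {γ ζ : ℝ → Hsp} {ω₁ : ℝ}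

lemma eq_of_forall_ne_zero (hζ : IsPositiveEquilibrium σ ζ) (hγ : IsNonnegCompleteTraj σ γ)
    (hbdd : BddTraj γ) (hω₁ : ω₁ < Real.pi ^ 2) (hσ : ∀ t, 0 ≤ σ t ∧ (σ t).2 ≤ ω₁)
    (hne : ∀ t, γ t ≠ 0) (t : ℝ) : γ t = ζ t :=
  hζ.eq_of_frequently_isPositiveAfter hγ hbdd
    (.of_forall fun a => hγ.isPositiveAfter_of_ne_zero (fun t => (hσ t).1) (hne a)) hω₁
    (fun t => (hσ t).2) t

lemma eq_zero_of_forall_norm_le {c ε : ℝ} (hζ : IsPositiveEquilibrium σ ζ)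
    (hγ : IsNonnegCompleteTraj σ γ) (hω₁ : ω₁ < Real.pi ^ 2)
    (hσ : ∀ t, 0 ≤ σ t ∧ (σ t).2 ≤ ω₁) (hc : ∀ t, c ≤ ‖ζ t‖) (hε : ε < c)
    (hle : ∀ t, ‖γ t‖ ≤ ε) (t : ℝ) : γ t = 0 := by
  by_contra ht
  have hlim := hζ.tendsto_norm_sub hγ (hγ.isPositiveAfter_of_ne_zero (fun t => (hσ t).1) ht) hω₁
    fun t => (hσ t).2
  obtain ⟨s, hs⟩ := (hlim.eventually_lt_const (sub_pos.2 hε)).exists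
  have htri := norm_le_insert (γ s) (ζ s)
  linarith [hc s, hle s]

end IsPositiveEquilibrium

/-! ### Morse sets in the skew product phase space -/

section EquilibriumGraph

variable {S : Set C(ℝ, ℝ × ℝ)} {ξ : C(ℝ, ℝ × ℝ) → ℝ → Hsp} {σ : C(ℝ, ℝ × ℝ)} {γ : ℝ → Hsp}

/-- The set `{(ξ_σ(0), σ) : σ ∈ S}` of the skew product phase space swept out by a family `ξ` of
trajectories. Both Morse sets are of this form. -/
def equilibriumGraph (S : Set C(ℝ, ℝ × ℝ)) (ξ : C(ℝ, ℝ × ℝ) → ℝ → Hsp) :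
    Set (Hsp × C(ℝ, ℝ × ℝ)) :=
  {p | ∃ σ ∈ S, p = (ξ σ 0, σ)}

/-- A family of bounded complete trajectories, indexed by a translation invariant set `S` of
symbols, such that translating the symbol translates the trajectory. -/
structure IsEquivariantFamily (S : Set C(ℝ, ℝ × ℝ)) (ξ : C(ℝ, ℝ × ℝ) → ℝ → Hsp) : Prop where
  translate_mem : ∀ σ ∈ S, ∀ t, translateCM t σ ∈ S
  isNonnegCompleteTraj : ∀ σ ∈ S, IsNonnegCompleteTraj σ (ξ σ)
  bddTraj : ∀ σ ∈ S, BddTraj (ξ σ)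
  apply_eq : ∀ σ ∈ S, ∀ t, ξ σ t = ξ (translateCM t σ) 0

namespace IsEquivariantFamily

lemma mem_equilibriumGraph (h : IsEquivariantFamily S ξ) (hσ : σ ∈ S) {t : ℝ}
    (ht : γ t = ξ σ t) : (γ t, translateCM t σ) ∈ equilibriumGraph S ξ :=
  ⟨translateCM t σ, h.translate_mem σ hσ t, by rw [ht, h.apply_eq σ hσ]⟩

lemma exists_traj_of_mem_equilibriumGraph (h : IsEquivariantFamily S ξ)
    {p : Hsp × C(ℝ, ℝ × ℝ)} (hp : p ∈ equilibriumGraph S ξ) :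
    ∃ σ ∈ S, ∃ γ : ℝ → Hsp, IsNonnegCompleteTraj σ γ ∧ BddTraj γ ∧ (γ 0, σ) = p ∧
      ∀ t, (γ t, translateCM t σ) ∈ equilibriumGraph S ξ := by
  obtain ⟨σ, hσ, rfl⟩ := hp
  exact ⟨σ, hσ, ξ σ, h.isNonnegCompleteTraj σ hσ, h.bddTraj σ hσ, rfl,
    fun _ => h.mem_equilibriumGraph hσ rfl⟩

end IsEquivariantFamily

lemma isCompact_equilibriumGraph (hS : IsCompact S) (hξ : ContinuousOn (fun σ => ξ σ 0) S) :
    IsCompact (equilibriumGraph S ξ) := by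
  convert hS.image_of_continuousOn (hξ.prodMk continuousOn_id) using 1
  ext p
  simp only [equilibriumGraph, mem_ofPred_eq, mem_image, id, eq_comm]

lemma tendsto_nhdsSet_of_tendsto_uniformity {ι X : Type*} [UniformSpace X] {K : Set X}
    (hK : IsCompact K) {p q : ι → X} {l : Filter ι} (hq : ∀ i, q i ∈ K)
    (h : Filter.Tendsto (fun i => (q i, p i)) l (uniformity X)) :
    Filter.Tendsto p l (nhdsSet K) := by
  refine (hK.nhdsSet_basis_uniformity (uniformity X).basis_sets).tendsto_right_iff.2 fun V hV => ?_
  filter_upwards [h hV] with i hi using mem_iUnion₂.2 ⟨q i, hq i, hi⟩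

lemma IsEquivariantFamily.tendsto_nhdsSet (h : IsEquivariantFamily S ξ)
    (hK : IsCompact (equilibriumGraph S ξ)) (hσ : σ ∈ S) {l : Filter ℝ}
    (hγ : Filter.Tendsto (fun t => ‖γ t - ξ σ t‖) l (nhds 0)) :
    Filter.Tendsto (fun t => (γ t, translateCM t σ)) l (nhdsSet (equilibriumGraph S ξ)) := by
  refine tendsto_nhdsSet_of_tendsto_uniformity hK
    (fun t => h.mem_equilibriumGraph (t := t) hσ rfl) ?_
  rw [uniformity_prod, Filter.tendsto_inf, Filter.tendsto_comap_iff, Filter.tendsto_comap_iff]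
  refine ⟨tendsto_uniformity_iff_dist_tendsto_zero.2 ?_, tendsto_diag_uniformity _ _⟩
  change Filter.Tendsto (fun t => dist (ξ σ t) (γ t)) l (nhds 0)
  simpa only [dist_eq_norm'] using hγ

lemma isEquivariantFamily_zero (hS : ∀ σ ∈ S, ∀ t, translateCM t σ ∈ S) :
    IsEquivariantFamily S (fun _ _ => 0) :=
  ⟨hS, fun σ _ => isNonnegCompleteTraj_zero σ, fun _ _ => ⟨0, fun _ => norm_zero.le⟩,
    fun _ _ _ => rfl⟩

lemma isEquivariantFamily_of_isPositiveEquilibrium {ω₁ : ℝ}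
    (hS : ∀ σ ∈ S, ∀ t, translateCM t σ ∈ S) (hξ : ∀ σ ∈ S, IsPositiveEquilibrium σ (ξ σ))
    (hω₁ : ω₁ < Real.pi ^ 2) (hSω : ∀ σ ∈ S, ∀ t, (σ t).2 ≤ ω₁) : IsEquivariantFamily S ξ :=
  ⟨hS, fun σ hσ => (hξ σ hσ).isNonnegCompleteTraj, fun σ hσ => (hξ σ hσ).bddTraj, fun σ hσ t => by
    simpa only [zero_add] using (hξ σ hσ).eq_translate (hξ _ (hS σ hσ t)) hω₁ (hSω σ hσ) 0⟩

lemma exists_isOpen_disjoint_equilibriumGraph {c : ℝ} (hc : 0 < c)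
    (hξ : ∀ σ ∈ S, c ≤ ‖ξ σ 0‖) :
    ∃ U₁ U₂ : Set (Hsp × C(ℝ, ℝ × ℝ)), IsOpen U₁ ∧ IsOpen U₂ ∧ Disjoint U₁ U₂ ∧
      equilibriumGraph S ξ ⊆ U₁ ∧ equilibriumGraph S (fun _ _ => 0) ⊆ U₂ := by
  refine ⟨{p | c / 2 < ‖p.1‖}, {p | ‖p.1‖ < c / 2}, isOpen_lt (by fun_prop) (by fun_prop),
    isOpen_lt (by fun_prop) (by fun_prop), ?_, ?_, ?_⟩
  · exact disjoint_left.2 fun p (h₁ : c / 2 < ‖p.1‖) h₂ => lt_asymm h₁ h₂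
  · rintro _ ⟨σ, hσ, rfl⟩
    exact (half_lt_self hc).trans_le (hξ σ hσ)
  · rintro _ ⟨σ, -, rfl⟩
    exact norm_zero.trans_lt (half_pos hc)

section Isolation

variable {ω₁ c : ℝ} (hξ : ∀ σ ∈ S, IsPositiveEquilibrium σ (ξ σ)) (hω₁ : ω₁ < Real.pi ^ 2)
  (hS : ∀ σ ∈ S, ∀ t, 0 ≤ σ t ∧ (σ t).2 ≤ ω₁) (hc : 0 < c) (hcξ : ∀ σ ∈ S, ∀ t, c ≤ ‖ξ σ t‖)
include hξ hω₁ hS hc hcξ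

lemma IsEquivariantFamily.exists_isOpen_isolating (h : IsEquivariantFamily S ξ) :
    ∃ U : Set (Hsp × C(ℝ, ℝ × ℝ)), IsOpen U ∧ equilibriumGraph S ξ ⊆ U ∧
      ∀ σ ∈ S, ∀ γ : ℝ → Hsp, IsNonnegCompleteTraj σ γ → BddTraj γ →
        (∀ t, (γ t, translateCM t σ) ∈ U) →
        ∀ t, (γ t, translateCM t σ) ∈ equilibriumGraph S ξ := by
  refine ⟨{p | p.1 ≠ 0}, isOpen_ne_fun continuous_fst continuous_const, ?_,
    fun σ hσ γ hγ hbdd hU t => h.mem_equilibriumGraph hσ <|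
      (hξ σ hσ).eq_of_forall_ne_zero hγ hbdd hω₁ (hS σ hσ) hU t⟩
  rintro _ ⟨σ, hσ, rfl⟩
  exact norm_pos_iff.1 (hc.trans_le (hcξ σ hσ 0))

lemma IsEquivariantFamily.exists_isOpen_isolating_zero
    (h : IsEquivariantFamily S (fun _ _ => 0)) :
    ∃ U : Set (Hsp × C(ℝ, ℝ × ℝ)), IsOpen U ∧ equilibriumGraph S (fun _ _ => 0) ⊆ U ∧
      ∀ σ ∈ S, ∀ γ : ℝ → Hsp, IsNonnegCompleteTraj σ γ → BddTraj γ →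
        (∀ t, (γ t, translateCM t σ) ∈ U) →
        ∀ t, (γ t, translateCM t σ) ∈ equilibriumGraph S (fun _ _ => 0) := by
  refine ⟨{p | ‖p.1‖ < c / 2}, isOpen_lt (by fun_prop) (by fun_prop), ?_,
    fun σ hσ γ hγ _ hU t => h.mem_equilibriumGraph hσ <|
      (hξ σ hσ).eq_zero_of_forall_norm_le hγ hω₁ (hS σ hσ) (hcξ σ hσ) (half_lt_self hc)
        (fun t => (hU t).le) t⟩
  rintro _ ⟨σ, -, rfl⟩
  exact norm_zero.trans_lt (half_pos hc)

end Isolation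

lemma IsEquivariantFamily.dichotomy_of_isPositiveEquilibrium {ω₁ : ℝ}
    (h₁ : IsEquivariantFamily S ξ) (h₂ : IsEquivariantFamily S (fun _ _ => 0))
    (hK : IsCompact (equilibriumGraph S ξ)) (hσ : σ ∈ S) (hξ : IsPositiveEquilibrium σ (ξ σ))
    (hω₁ : ω₁ < Real.pi ^ 2) (hσω : ∀ t, 0 ≤ σ t ∧ (σ t).2 ≤ ω₁)
    (hγ : IsNonnegCompleteTraj σ γ) (hbdd : BddTraj γ) :
    (∀ t, (γ t, translateCM t σ) ∈ equilibriumGraph S ξ) ∨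
      (∀ t, (γ t, translateCM t σ) ∈ equilibriumGraph S (fun _ _ => 0)) ∨
      (Filter.Tendsto (fun t => (γ t, translateCM t σ)) Filter.atTop
          (nhdsSet (equilibriumGraph S ξ)) ∧
        Filter.Tendsto (fun t => (γ t, translateCM t σ)) Filter.atBot
          (nhdsSet (equilibriumGraph S (fun _ _ => 0)))) := by
  refine (hξ.trichotomy hγ hbdd hω₁ hσω).imp (fun h t => h₁.mem_equilibriumGraph hσ (h t)) <|
    .imp (fun h t => h₂.mem_equilibriumGraph hσ (h t)) fun ⟨htop, hbot⟩ =>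
      ⟨h₁.tendsto_nhdsSet hK hσ htop, ?_⟩
  refine (Filter.tendsto_principal.2 ?_).mono_right principal_le_nhdsSet
  exact hbot.mono fun t ht => h₂.mem_equilibriumGraph hσ ht

end EquilibriumGraph

lemma Cond1.apply_mem_Icc {b ω : ℝ → ℝ} {b₀ b₁ ω₀ ω₁ : ℝ} {σ₀ : C(ℝ, ℝ × ℝ)}
    (hC : Cond1 b ω b₀ b₁ ω₀ ω₁) (hσ₀ : ∀ t, σ₀ t = (b t, ω t)) (t : ℝ) :
    σ₀ t ∈ Icc (b₀, 0) (b₁, ω₁) := by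
  rw [hσ₀]
  exact ⟨⟨hC.blb t, hC.ω0nonneg.trans (hC.ωlb t)⟩, hC.bub t, hC.ωub t⟩

lemma Cond1.bounds_of_mem_hullSet {b ω : ℝ → ℝ} {b₀ b₁ ω₀ ω₁ : ℝ} {σ σ₀ : C(ℝ, ℝ × ℝ)}
    (hC : Cond1 b ω b₀ b₁ ω₀ ω₁) (hσ₀ : ∀ t, σ₀ t = (b t, ω t)) (hσ : σ ∈ hullSet σ₀) (t : ℝ) :
    (b₀, 0) ≤ σ t ∧ |(σ t).1| ≤ b₁ ∧ 0 ≤ σ t ∧ (σ t).2 ≤ ω₁ := by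
  obtain ⟨hlow, hup⟩ := apply_mem_of_mem_hullSet isClosed_Icc (hC.apply_mem_Icc hσ₀) hσ t
  have hnonneg : 0 ≤ σ t := ⟨hC.b0pos.le.trans hlow.1, hlow.2⟩
  exact ⟨hlow, (abs_of_nonneg hnonneg.1).trans_le hup.1, hnonneg, hup.2⟩

/-- under (Cond1), `ω₁ < π²` and uniform continuity of `b, ω`, the
skew product semiflow `Π⁺` on `𝒳⁺ = H⁺ × Σ` is dynamically gradient with respect
to the disjoint family of isolated weakly invariant sets `ℳ = {M₁, M₂}`, where
`M₁ = {(ξ_{M,σ}(0),σ) : σ ∈ Σ}` and `M₂ = {(0,σ) : σ ∈ Σ}`: the sets `M₁, M₂`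
are weakly invariant, can be separated by disjoint open neighborhoods, are
isolated, and every bounded complete trajectory of `𝒦⁺` either lies entirely in
`M₁`, or entirely in `M₂`, or converges to `M₁` as `t → +∞` and to `M₂`
as `t → −∞`. -/
theorem statement19
    (b ω : ℝ → ℝ) (b0 b1 ω0 ω1 : ℝ) (hC : Cond1 b ω b0 b1 ω0 ω1)
    (hω1 : ω1 < Real.pi ^ 2)
    (hbu : UniformContinuous b) (hωu : UniformContinuous ω)
    (σ0 : C(ℝ, ℝ × ℝ)) (hσ0 : ∀ t, σ0 t = (b t, ω t))
    (ξ : C(ℝ, ℝ × ℝ) → ℝ → Hsp)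
    (hξ : ∀ σ ∈ hullSet σ0,
      IsNonnegCompleteTraj σ (ξ σ) ∧ BddTraj (ξ σ) ∧
      (∀ t : ℝ, IsPositive (ξ σ t)) ∧
      ∀ γ : ℝ → Hsp, IsNonnegCompleteTraj σ γ → BddTraj γ →
        (∀ t : ℝ, IsPositive (γ t)) → ∀ t : ℝ, γ t = ξ σ t) :
    -- the two Morse sets
    (let M₁ : Set (Hsp × C(ℝ, ℝ × ℝ)) :=
        {p | ∃ σ ∈ hullSet σ0, p = (ξ σ 0, σ)}
     let M₂ : Set (Hsp × C(ℝ, ℝ × ℝ)) :=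
        {p | ∃ σ ∈ hullSet σ0, p = ((0 : Hsp), σ)}
     -- `M₁` and `M₂` are weakly invariant
     (∀ i : Fin 2, ∀ p ∈ (if i = 0 then M₁ else M₂),
        ∃ σ ∈ hullSet σ0, ∃ γ : ℝ → Hsp,
          IsNonnegCompleteTraj σ γ ∧ BddTraj γ ∧ (γ 0, σ) = p ∧
          ∀ t : ℝ, (γ t, translateCM t σ) ∈ (if i = 0 then M₁ else M₂)) ∧
     -- they are disjoint (they have disjoint open neighborhoods)
     (∃ U₁ U₂ : Set (Hsp × C(ℝ, ℝ × ℝ)), IsOpen U₁ ∧ IsOpen U₂ ∧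
        Disjoint U₁ U₂ ∧ M₁ ⊆ U₁ ∧ M₂ ⊆ U₂) ∧
     -- they are isolated: maximal weakly invariant sets in some open neighborhood
     (∀ i : Fin 2, ∃ U : Set (Hsp × C(ℝ, ℝ × ℝ)), IsOpen U ∧
        (if i = 0 then M₁ else M₂) ⊆ U ∧
        ∀ σ ∈ hullSet σ0, ∀ γ : ℝ → Hsp,
          IsNonnegCompleteTraj σ γ → BddTraj γ →
          (∀ t : ℝ, (γ t, translateCM t σ) ∈ U) →
          ∀ t : ℝ, (γ t, translateCM t σ) ∈ (if i = 0 then M₁ else M₂)) ∧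
     -- dynamical gradient dichotomy
     ∀ σ ∈ hullSet σ0, ∀ γ : ℝ → Hsp,
        IsNonnegCompleteTraj σ γ → BddTraj γ →
        (∀ t : ℝ, (γ t, translateCM t σ) ∈ M₁) ∨
        (∀ t : ℝ, (γ t, translateCM t σ) ∈ M₂) ∨
        (Filter.Tendsto (fun t => (γ t, translateCM t σ)) Filter.atTop
            (nhdsSet M₁) ∧
         Filter.Tendsto (fun t => (γ t, translateCM t σ)) Filter.atBot
            (nhdsSet M₂))) := by
  intro M₁ M₂
  have hbd {σ} (hσ : σ ∈ hullSet σ0) := hC.bounds_of_mem_hullSet hσ0 hσ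
  have hθ (σ) (hσ : σ ∈ hullSet σ0) (t) := translateCM_mem_hullSet hσ t
  have hnonneg (σ) (hσ : σ ∈ hullSet σ0) (t) : 0 ≤ σ t ∧ (σ t).2 ≤ ω1 := (hbd hσ t).2.2
  have hE (σ) (hσ : σ ∈ hullSet σ0) : IsPositiveEquilibrium σ (ξ σ) :=
    ⟨(hξ σ hσ).1, (hξ σ hσ).2.1, fun t => ((hξ σ hσ).2.2.1 t).ae_pos⟩
  have hc : 0 < 2 * b0 / Real.pi ^ 3 := by have := hC.b0pos; positivity
  have hnorm (σ) (hσ : σ ∈ hullSet σ0) : ∀ t, 2 * b0 / Real.pi ^ 3 ≤ ‖ξ σ t‖ :=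
    (hE σ hσ).le_norm fun t => (hbd hσ t).1
  have h₁ : IsEquivariantFamily (hullSet σ0) ξ :=
    isEquivariantFamily_of_isPositiveEquilibrium hθ hE hω1 fun σ hσ t => (hnonneg σ hσ t).2
  have h₂ := isEquivariantFamily_zero hθ
  have hM₁ : IsCompact M₁ := isCompact_equilibriumGraph
    (isCompact_hullSet isCompact_Icc (hC.apply_mem_Icc hσ0) (funext hσ0 ▸ hbu.prodMk hωu))
    (continuousOn_equilibrium hE hω1 fun σ hσ t => ⟨(hbd hσ t).2.1, (hbd hσ t).2.2.2⟩)
  exact ⟨Fin.forall_fin_two.2 ⟨fun _ => h₁.exists_traj_of_mem_equilibriumGraph,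
      fun _ => h₂.exists_traj_of_mem_equilibriumGraph⟩,
    exists_isOpen_disjoint_equilibriumGraph hc fun σ hσ => hnorm σ hσ 0,
    Fin.forall_fin_two.2 ⟨h₁.exists_isOpen_isolating hE hω1 hnonneg hc hnorm,
      h₂.exists_isOpen_isolating_zero hE hω1 hnonneg hc hnorm⟩,
    fun σ hσ _ => h₁.dichotomy_of_isPositiveEquilibrium h₂ hM₁ hσ (hE σ hσ) hω1 (hnonneg σ hσ)⟩

end
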